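/- Let k ≥ 1 and let F(X) = ∏_{i=1}^k (a_i X + b_i) with a_i nonzero integers and b_i integers, such that F is admissible and Δ(F) ≠ 0. For every integer r ≥ 1 there exist a constant c(F,r) > 0 and N_0(F,r) such that the following holds for all N ≥ N_0(F,r). Set z = (log N)/3 and M = ∏_{p ≤ z, p prime} p; let A ⊆ S_F(N, N^{1/(4k+1)}), let b ∈ {0,…,M−1}, let A_b = {n ∈ ℕ : b + nM ∈ A}, let G(X) = F(b + MX), and let S ⊂ ℚ be the set of rational roots of G. If h_1, …, h_r are distinct integers with |h_i| ≤ N^{100} for all i and h_i − h_j ∉ (S − S) ∩ ℤ for all i ≠ j, then |(A_b + h_1) ∩ ⋯ ∩ (A_b + h_r)| ≤ c(F,r)·(log z)^{kr}·(log N)^{−kr}·N/M. In particular the constant c(F,r) does not depend on the h_i or on b. -/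

import Mathlib

/-- The primorial of a real number `z`: the product of all primes `p ≤ z`. -/
noncomputable def primor (z : ℝ) : ℕ :=
  ∏ p ∈ (Finset.range (⌊z⌋₊ + 1)).filter Nat.Prime, p

/-- `S_F(N, z)`: the set of natural numbers `n ≤ N` with `gcd(F(n), P(z)) = 1`. -/
noncomputable def SFset (F : ℤ → ℤ) (N : ℕ) (z : ℝ) : Finset ℕ :=
  (Finset.Icc 1 N).filter (fun n => Int.gcd (F n) (primor z) = 1)

/-- `A_b = {n : b + nM ∈ A}` (automatically contained in `[0, N]`). -/
def Abset (A : Finset ℕ) (N M b : ℕ) : Finset ℕ :=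
  (Finset.range (N + 1)).filter (fun n => b + n * M ∈ A)

section
open Finset

lemma mert1 (n : ℕ) (hn : 1 ≤ n) :
    ∑ p ∈ (n+1).primesBelow, Real.log p / p ≤ Real.log n + Real.log 4 := by
  have hdvd : ∏ p ∈ (n+1).primesBelow, p ^ (n / p) ∣ n.factorial := by
    apply Finset.prod_dvd_of_isRelPrime
    · intro p hp q hq hpq
      have hp' := Nat.prime_of_mem_primesBelow hp
      have hq' := Nat.prime_of_mem_primesBelow hq
      exact Nat.coprime_iff_isRelPrime.1 (Nat.Coprime.pow _ _ ((Nat.coprime_primes hp' hq').2 hpq))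
    · intro p hp
      have hp' := Nat.prime_of_mem_primesBelow hp
      rw [hp'.pow_dvd_factorial_iff (Nat.lt_succ_self _)]
      have h1 : 1 ∈ Finset.Ico 1 (Nat.log p n).succ := by
        have := Nat.lt_of_mem_primesBelow hp
        have := Nat.log_pos hp'.one_lt (show p ≤ n by omega)
        exact Finset.mem_Ico.2 ⟨le_refl _, by omega⟩
      have := Finset.single_le_sum (f := fun i => n / p ^ i) (fun i _ => Nat.zero_le _) h1
      simpa using this
  have hle := Nat.le_of_dvd (Nat.factorial_pos n) hdvd
  have hle2 : ∏ p ∈ (n+1).primesBelow, p ^ (n / p) ≤ n ^ n := hle.trans (Nat.factorial_le_pow n)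
  have hlog : ∑ p ∈ (n+1).primesBelow, ((n / p : ℕ) : ℝ) * Real.log p ≤ n * Real.log n := by
    have h2 : ((∏ p ∈ (n+1).primesBelow, p ^ (n / p) : ℕ) : ℝ) ≤ ((n ^ n : ℕ) : ℝ) := by exact_mod_cast hle2
    have h3 := Real.log_le_log (by
      have : 0 < ∏ p ∈ (n+1).primesBelow, p ^ (n / p) := 
        Finset.prod_pos (fun p hp => pow_pos (Nat.prime_of_mem_primesBelow hp).pos _)
      exact_mod_cast this) h2
    push_cast at h3
    rw [Real.log_pow, Real.log_prod (fun p hp => by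
      have := (Nat.prime_of_mem_primesBelow hp).pos
      positivity)] at h3
    simpa [Real.log_pow] using h3
  have hth : ∑ p ∈ (n+1).primesBelow, Real.log p ≤ Real.log 4 * n := by
    have := Chebyshev.theta_le_log4_mul_x (x := n) (by positivity)
    rw [Chebyshev.theta_eq_sum_primesLE_log] at this
    exact this
  have hn0 : (0:ℝ) < n := by exact_mod_cast hn
  have key : (n:ℝ) * ∑ p ∈ (n+1).primesBelow, Real.log p / p ≤ n * (Real.log n + Real.log 4) := by
    have : (n:ℝ) * ∑ p ∈ (n+1).primesBelow, Real.log p / p ≤ 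
        ∑ p ∈ (n+1).primesBelow, (((n / p : ℕ) : ℝ) * Real.log p + Real.log p) := by
      rw [Finset.mul_sum]
      apply Finset.sum_le_sum
      intro p hp
      have hp' := Nat.prime_of_mem_primesBelow hp
      have hl : 0 ≤ Real.log p := Real.log_natCast_nonneg p
      have h4 : (n:ℝ) / p ≤ (n / p : ℕ) + 1 := by
        have := Nat.lt_floor_add_one ((n:ℝ)/p)
        rw [Nat.floor_div_eq_div] at this
        exact this.le
      calc (n:ℝ) * (Real.log p / p) = (n / p) * Real.log p := by ring
        _ ≤ ((n / p : ℕ) + 1) * Real.log p := by gcongr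
        _ = _ := by ring
    rw [Finset.sum_add_distrib] at this
    linarith
  exact le_of_mul_le_mul_left key hn0

lemma sum_inv_pp (n : ℕ) : ∑ p ∈ (n+1).primesBelow, (1:ℝ) / (p * (p - 1)) ≤ 1 := by
  have h : ∑ m ∈ Finset.Icc 2 (n+1), (1:ℝ) / (m * (m - 1)) = 1 - 1 / (n+1) := by
    induction n with
    | zero => simp
    | succ n ih =>
      rw [← Finset.insert_Icc_right_eq_Icc_add_one (by omega), Finset.sum_insert (by simp), ih]
      push_cast
      field_simp
      ring
  calc _ ≤ ∑ m ∈ Finset.Icc 2 (n+1), (1:ℝ) / (m * (m - 1)) := by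
        apply Finset.sum_le_sum_of_subset_of_nonneg
        · intro p hp
          have := (Nat.prime_of_mem_primesBelow hp).two_le
          have := Nat.lt_of_mem_primesBelow hp
          simp; omega
        · intro m hm _
          have : (2:ℝ) ≤ m := by exact_mod_cast (Finset.mem_Icc.1 hm).1
          have : (0:ℝ) ≤ m - 1 := by linarith
          positivity
    _ ≤ 1 := by rw [h]; have : (0:ℝ) ≤ 1 / (n+1) := by positivity
                linarith

noncomputable def rpowHom (s : ℝ) : ℕ →* ℝ where
  toFun m := (m:ℝ) ^ (-s)
  map_one' := by simp
  map_mul' a b := by push_cast; rw [Real.mul_rpow (by positivity) (by positivity)]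

lemma rpowHom_lt (s : ℝ) (hs : 0 < s) {p : ℕ} (hp : p.Prime) : ‖rpowHom s p‖ < 1 := by
  have : (1:ℝ) < p := by exact_mod_cast hp.one_lt
  have h0 : (0:ℝ) ≤ (p:ℝ)^(-s) := by positivity
  show ‖(p:ℝ)^(-s)‖ < 1
  rw [Real.norm_of_nonneg h0]
  exact Real.rpow_lt_one_of_one_lt_of_neg this (by linarith)

lemma mert_lower (n : ℕ) (hn : 2 ≤ n) :
    Real.log (Real.log n) ≤ ∑ p ∈ (n+1).primesBelow, (1:ℝ) / p + 1 := by
  have hn1 : (1:ℝ) < n := by exact_mod_cast hn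
  have hl : 0 < Real.log n := Real.log_pos hn1
  obtain ⟨h1, h2⟩ := EulerProduct.summable_and_hasSum_smoothNumbers_prod_primesBelow_geometric
    (f := rpowHom 1) (fun {p} hp => rpowHom_lt 1 one_pos hp) (n+1)
  have h3 : ∑ m ∈ Finset.Icc 1 n, (1:ℝ)/m ≤ ∏ p ∈ (n+1).primesBelow, (1 - rpowHom 1 p)⁻¹ := by
    rw [← h2.tsum_eq]
    have hm : ∀ m ∈ Finset.Icc 1 n, m ∈ (n+1).smoothNumbers := by
      intro m hm
      rw [Finset.mem_Icc] at hm
      exact Nat.mem_smoothNumbers_of_lt (by omega) (by omega)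
    have h4 := h2.summable.sum_le_tsum ((Finset.Icc 1 n).subtype (· ∈ (n+1).smoothNumbers)) 
      (fun m _ => (by show 0 ≤ ((m:ℕ):ℝ)^(-1:ℝ); positivity))
    refine le_trans (le_of_eq ?_) h4
    rw [Finset.sum_subtype_of_mem (fun m => rpowHom 1 m) hm]
    apply Finset.sum_congr rfl
    intro m _
    show _ = (m:ℝ)^(-1:ℝ)
    rw [Real.rpow_neg_one]; simp
  have h5 : Real.log n ≤ ∑ m ∈ Finset.Icc 1 n, (1:ℝ)/m := by
    have := log_add_one_le_harmonic n
    rw [harmonic_eq_sum_Icc] at this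
    push_cast at this
    simp only [one_div]
    refine le_trans ?_ this
    apply Real.log_le_log <;> linarith
  have h6 : ∏ p ∈ (n+1).primesBelow, (1 - rpowHom 1 p)⁻¹ ≤ 
      Real.exp (∑ p ∈ (n+1).primesBelow, ((1:ℝ) / p + 1 / (p * (p-1)))) := by
    rw [Real.exp_sum]
    apply Finset.prod_le_prod
    · intro p hp
      have := rpowHom_lt 1 one_pos (Nat.prime_of_mem_primesBelow hp)
      have := (abs_lt.1 this).2
      rw [inv_nonneg]; linarith
    · intro p hp
      have hp2 : (2:ℝ) ≤ p := by exact_mod_cast (Nat.prime_of_mem_primesBelow hp).two_le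
      have e : rpowHom 1 p = (p:ℝ)⁻¹ := Real.rpow_neg_one _
      rw [e]
      have hp3 : (p:ℝ) - 1 ≠ 0 := by linarith
      have : (1 - (p:ℝ)⁻¹)⁻¹ = ((1:ℝ) / p + 1 / (p * (p-1))) + 1 := by field_simp; ring
      rw [this]
      exact Real.add_one_le_exp _
  have h7 := Real.log_le_log hl (h5.trans (h3.trans h6))
  rw [Real.log_exp, Finset.sum_add_distrib] at h7
  have := sum_inv_pp n
  linarith

lemma zeta_bd (e : ℝ) (he : 0 < e) (n : ℕ) :
    ∑ m ∈ Finset.range n, (m:ℝ) ^ (-(1+e)) ≤ 1 + 1/e := by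
  have key : ∀ n : ℕ, ∑ m ∈ Finset.range (n+2), (m:ℝ) ^ (-(1+e)) ≤ 1 + 1/e - (1/e) * ((n+1:ℝ))^(-e) := by
    intro n
    induction n with
    | zero => 
      have : (-(1+e)) ≠ 0 := by linarith
      rw [Finset.sum_range_succ, Finset.sum_range_succ]
      simp only [Nat.cast_zero, Real.zero_rpow this]; simp
    | succ n ih =>
      rw [Finset.sum_range_succ]
      push_cast
      have h1 : ((n:ℝ)+2)^(-(1+e)) ≤ (1/e) * ((n+1:ℝ)^(-e) - (n+2:ℝ)^(-e)) := by
        have ha : (0:ℝ) < (n:ℝ)+2 := by positivity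
        have hb : (0:ℝ) < (n:ℝ)+1 := by positivity
        have e1 : ((n:ℝ)+2)^(-(1+e)) = ((n:ℝ)+2)^(-e) * (1/(n+2)) := by
          rw [show -(1+e) = -e + -1 by ring, Real.rpow_add ha, Real.rpow_neg_one]; simp
        have e2 : ((n:ℝ)+1)^(-e) = ((n:ℝ)+2)^(-e) * (((n:ℝ)+1)/(n+2))^(-e) := by
          rw [← Real.mul_rpow ha.le (by positivity)]
          congr 1; field_simp
        have e3 : 1 + e * (1/(n+2)) ≤ (((n:ℝ)+1)/(n+2))^(-e) := by
          rw [Real.rpow_def_of_pos (by positivity)]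
          have := Real.log_le_sub_one_of_pos (x := ((n:ℝ)+1)/(n+2)) (by positivity)
          have h8 : ((n:ℝ)+1)/(n+2) - 1 = - (1/(n+2)) := by field_simp; ring
          rw [h8] at this
          calc 1 + e * (1/((n:ℝ)+2)) ≤ Real.exp (e * (1/((n:ℝ)+2))) := by 
                have := Real.add_one_le_exp (e * (1/((n:ℝ)+2))); linarith
            _ ≤ _ := by
              apply Real.exp_le_exp.2
              nlinarith
        rw [e1, e2]
        have h9 : (0:ℝ) < ((n:ℝ)+2)^(-e) := by positivity
        have : ((n:ℝ)+2)^(-e) * (1/(n+2)) = (1/e) * (((n:ℝ)+2)^(-e) * (1 + e * (1/(n+2))) - ((n:ℝ)+2)^(-e)) := by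
          field_simp; ring
        rw [this]
        gcongr
      have h2 : ((n:ℝ)+1+1) = n+2 := by ring
      rw [h2]
      linarith
  calc _ ≤ ∑ m ∈ Finset.range (n+2), (m:ℝ) ^ (-(1+e)) := by
        apply Finset.sum_le_sum_of_subset_of_nonneg
        · intro m; simp; omega
        · intros; positivity
    _ ≤ _ := key n
    _ ≤ _ := by 
      have : 0 ≤ (1/e) * ((n+1:ℝ))^(-e) := by positivity
      linarith

lemma mert_upper (n : ℕ) (hn : 3 ≤ n) :
    ∑ p ∈ (n+1).primesBelow, (1:ℝ) / p ≤ Real.log (Real.log n) + 4 := by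
  have hn3 : (3:ℝ) ≤ n := by exact_mod_cast hn
  have hl : 1 ≤ Real.log n := by
    rw [Real.le_log_iff_exp_le (by linarith)]
    linarith [Real.exp_one_lt_d9]
  set L := Real.log n with hL
  have hL0 : 0 < L := by linarith
  have he : (0:ℝ) < 1 / L := by positivity
  obtain ⟨h1, h2⟩ := EulerProduct.summable_and_hasSum_smoothNumbers_prod_primesBelow_geometric
    (f := rpowHom (1+1/L)) (fun {p} hp => rpowHom_lt _ (by positivity) hp) (n+1)
  have hs : Summable (fun m : ℕ => (m:ℝ)^(-(1+1/L))) := Real.summable_nat_rpow.2 (by linarith)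
  have h3 : ∏ p ∈ (n+1).primesBelow, (1 - rpowHom (1+1/L) p)⁻¹ ≤ 1 + L := by
    rw [← h2.tsum_eq]
    calc _ ≤ ∑' m : ℕ, (m:ℝ)^(-(1+1/L)) := 
          hs.tsum_subtype_le (fun m : ℕ => (m:ℝ)^(-(1+1/L))) _ (fun m => by positivity)
      _ ≤ 1 + 1/(1/L) := Real.tsum_le_of_sum_range_le (fun m => by positivity) (zeta_bd _ he)
      _ = _ := by simp
  have h4 : Real.exp (∑ p ∈ (n+1).primesBelow, (p:ℝ)^(-(1+1/L))) ≤ 1 + L := by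
    refine le_trans ?_ h3
    rw [Real.exp_sum]
    apply Finset.prod_le_prod
    · intros; positivity
    · intro p hp
      have h5 := rpowHom_lt (1+1/L) (by positivity) (Nat.prime_of_mem_primesBelow hp)
      have h6 := (abs_lt.1 h5).2
      change (p:ℝ)^(-(1+1/L)) < 1 at h6
      show _ ≤ (1 - (p:ℝ)^(-(1+1/L)))⁻¹
      rw [le_inv_comm₀ (by positivity) (by linarith), ← Real.exp_neg]
      linarith [Real.add_one_le_exp (-(p:ℝ)^(-(1+1/L)))]
  have h5 : ∑ p ∈ (n+1).primesBelow, (p:ℝ)^(-(1+1/L)) ≤ Real.log L + 1 := by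
    have := Real.log_le_log (by positivity) h4
    rw [Real.log_exp] at this
    refine this.trans ?_
    have h8 : 1 + L ≤ L * Real.exp 1 := by
      have := Real.exp_one_gt_d9
      nlinarith
    have := Real.log_le_log (by positivity) h8
    rwa [Real.log_mul (by positivity) (by positivity), Real.log_exp] at this
  have h6 : ∑ p ∈ (n+1).primesBelow, ((1:ℝ)/p - (p:ℝ)^(-(1+1/L))) ≤ (1/L) * ∑ p ∈ (n+1).primesBelow, Real.log p / p := by
    rw [Finset.mul_sum]
    apply Finset.sum_le_sum
    intro p hp
    have hp0 : (0:ℝ) < p := by exact_mod_cast (Nat.prime_of_mem_primesBelow hp).pos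
    rw [show -(1+1/L) = -1 + -(1/L) by ring, Real.rpow_add hp0, Real.rpow_neg_one, 
      Real.rpow_def_of_pos hp0]
    have := Real.add_one_le_exp (Real.log p * -(1/L))
    have h7 : (0:ℝ) < (p:ℝ)⁻¹ := by positivity
    have : (p:ℝ)⁻¹ * (Real.log p * -(1/L) + 1) ≤ (p:ℝ)⁻¹ * Real.exp (Real.log p * -(1/L)) := by gcongr
    have e : 1 / L * (Real.log p / p) = - ((p:ℝ)⁻¹ * (Real.log p * -(1/L))) := by ring
    rw [e, one_div]
    linarith
  have h7 := mert1 n (by omega)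
  have h8 : (1/L) * ∑ p ∈ (n+1).primesBelow, Real.log p / p ≤ 1 + Real.log 4 := by
    calc _ ≤ (1/L) * (L + Real.log 4) := by gcongr
      _ = 1 + (1/L) * Real.log 4 := by field_simp
      _ ≤ 1 + 1 * Real.log 4 := by
        have : 0 ≤ Real.log 4 := Real.log_nonneg (by norm_num)
        have : 1/L ≤ 1 := by rw [div_le_one hL0]; exact hl
        gcongr
      _ = _ := by ring
  rw [Finset.sum_sub_distrib] at h6
  have : Real.log 4 ≤ 2 := by
    rw [show (4:ℝ) = 2^2 by norm_num, Real.log_pow]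
    have := Real.log_two_lt_d9
    push_cast; linarith
  linarith

end

namespace SelbAux
open Finset BoundingSieve
open scoped ArithmeticFunction.Moebius

noncomputable def Ssum (s : BoundingSieve) (R : ℕ) : ℝ :=
  ∑ l ∈ s.prodPrimes.divisors, if l ≤ R then s.selbergTerms l else 0

noncomputable def wt (s : BoundingSieve) (R : ℕ) (d : ℕ) : ℝ :=
  if d ∣ s.prodPrimes then
    (s.nu d)⁻¹ * ((μ d : ℤ) : ℝ) *
      ((∑ l ∈ s.prodPrimes.divisors, if d ∣ l ∧ l ≤ R then s.selbergTerms l else 0) / Ssum s R)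
  else 0

lemma Ssum_pos (s : BoundingSieve) (R : ℕ) (hR : 1 ≤ R) : 0 < Ssum s R := by
  unfold Ssum
  apply Finset.sum_pos'
  · intro l hl
    split_ifs
    · exact (selbergTerms_pos (Nat.dvd_of_mem_divisors hl)).le
    · exact le_rfl
  · refine ⟨1, by simp [prodPrimes_ne_zero], ?_⟩
    rw [if_pos hR]
    exact selbergTerms_pos (one_dvd _)

lemma wt_one (s : BoundingSieve) (R : ℕ) (hR : 1 ≤ R) : wt s R 1 = 1 := by
  have h := (Ssum_pos s R hR).ne'
  unfold wt
  simp only [one_dvd, if_true, true_and, s.nu_mult.map_one]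
  change _ * (Ssum s R / Ssum s R) = 1
  simp [h]

lemma wt_abs_le (s : BoundingSieve) (R : ℕ) (hR : 1 ≤ R) (d : ℕ) (hd : d ∣ s.prodPrimes) :
    |wt s R d| ≤ (s.nu d)⁻¹ := by
  have h := (Ssum_pos s R hR)
  have hnu := nu_pos_of_dvd_prodPrimes hd
  unfold wt
  rw [if_pos hd, abs_mul, abs_mul, abs_of_pos (inv_pos.2 hnu)]
  have h1 : |((μ d : ℤ) : ℝ)| ≤ 1 := by
    exact_mod_cast ArithmeticFunction.abs_moebius_le_one
  have h2 : |(∑ l ∈ s.prodPrimes.divisors, if d ∣ l ∧ l ≤ R then s.selbergTerms l else 0) / Ssum s R| ≤ 1 := by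
    rw [abs_div, abs_of_pos h, div_le_one h, abs_of_nonneg]
    · unfold Ssum
      apply Finset.sum_le_sum
      intro l hl
      have := (selbergTerms_pos (Nat.dvd_of_mem_divisors hl)).le
      split_ifs <;> first | exact le_rfl | exact this | (exfalso; tauto)
    · apply Finset.sum_nonneg
      intro l hl
      have := (selbergTerms_pos (Nat.dvd_of_mem_divisors hl)).le
      split_ifs <;> first | exact le_rfl | exact this
  calc _ ≤ (s.nu d)⁻¹ * 1 * 1 := by gcongr
    _ = _ := by ring

lemma wt_eq_zero (s : BoundingSieve) (R : ℕ) (d : ℕ) (hd : R < d) : wt s R d = 0 := by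
  unfold wt
  split_ifs with h
  · rw [Finset.sum_eq_zero]
    · simp
    · intro l hl
      rw [if_neg]
      rintro ⟨h1, h2⟩
      have := Nat.le_of_dvd (Nat.pos_of_mem_divisors hl) h1
      omega
  · rfl

lemma moeb_aux (P l m : ℕ) (hP : Squarefree P) (hm : m ∣ P) (hl : l ∣ P):
    ∑ d ∈ P.divisors, (if l ∣ d ∧ d ∣ m then ((μ d : ℤ) : ℝ) else 0) = if m = l then ((μ l : ℤ) : ℝ) else 0 := by
  have hP0 := hP.ne_zero
  have hm0 : m ≠ 0 := ne_zero_of_dvd_ne_zero hP0 hm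
  by_cases hlm : l ∣ m
  · obtain ⟨e, rfl⟩ := hlm
    have hsq : Squarefree (l * e) := hP.squarefree_of_dvd hm
    have hl0 : l ≠ 0 := left_ne_zero_of_mul hm0
    have he0 : e ≠ 0 := right_ne_zero_of_mul hm0
    have h1 : ∑ d ∈ P.divisors, (if l ∣ d ∧ d ∣ l * e then ((μ d : ℤ) : ℝ) else 0)
       = ∑ f ∈ e.divisors, ((μ (l * f) : ℤ) : ℝ) := by
      rw [← Finset.sum_filter]
      symm
      apply Finset.sum_bij (fun f _ => l * f)
      · intro f hf
        rw [Nat.mem_divisors] at hf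
        have : l * f ∣ l * e := Nat.mul_dvd_mul_left l hf.1
        simp [hP0, this, this.trans hm]
      · intro a _ b _ h
        exact Nat.eq_of_mul_eq_mul_left (Nat.pos_of_ne_zero hl0) h
      · intro d hd
        simp only [mem_filter] at hd
        obtain ⟨_, ⟨f, rfl⟩, h3⟩ := hd
        exact ⟨f, by simp [he0, Nat.dvd_of_mul_dvd_mul_left (Nat.pos_of_ne_zero hl0) h3], rfl⟩
      · intros; rfl
    rw [h1]
    have h2 : ∀ f ∈ e.divisors, ((μ (l * f) : ℤ) : ℝ) = ((μ l : ℤ) : ℝ) * ((μ f : ℤ) : ℝ) := by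
      intro f hf
      have hc : l.Coprime f := by
        have := Nat.coprime_of_squarefree_mul hsq
        exact this.coprime_dvd_right (Nat.dvd_of_mem_divisors hf)
      rw [ArithmeticFunction.isMultiplicative_moebius.map_mul_of_coprime hc]
      push_cast; rfl
    rw [Finset.sum_congr rfl h2, ← Finset.mul_sum]
    have h3 : ∑ f ∈ e.divisors, ((μ f : ℤ) : ℝ) = if e = 1 then 1 else 0 := by
      have h4 : ∑ f ∈ e.divisors, μ f = if e = 1 then 1 else 0 := by
        have h5 := congrArg (fun f : ArithmeticFunction ℤ => f e) ArithmeticFunction.coe_zeta_mul_moebius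
        simp only [ArithmeticFunction.coe_zeta_mul_apply, ArithmeticFunction.one_apply] at h5
        exact h5
      exact_mod_cast h4
    rw [h3]
    by_cases he : e = 1
    · simp [he]
    · have : ¬ (l * e = l) := by
        intro h
        exact he (Nat.eq_of_mul_eq_mul_left (Nat.pos_of_ne_zero hl0) (by simpa using h))
      simp [he, hl0]
  · rw [Finset.sum_eq_zero, if_neg]
    · rintro rfl; exact hlm dvd_rfl
    · intro d _
      rw [if_neg]
      rintro ⟨h1, h2⟩
      exact hlm (h1.trans h2)

lemma wt_diag (s : BoundingSieve) (R : ℕ) (l : ℕ) (hl : l ∣ s.prodPrimes) :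
    (∑ d ∈ s.prodPrimes.divisors, if l ∣ d then s.nu d * wt s R d else 0)
      = if l ≤ R then ((μ l : ℤ) : ℝ) * s.selbergTerms l / Ssum s R else 0 := by
  have h1 : ∀ d ∈ s.prodPrimes.divisors, (if l ∣ d then s.nu d * wt s R d else 0) =
      ∑ m ∈ s.prodPrimes.divisors, (if l ∣ d ∧ d ∣ m then ((μ d : ℤ) : ℝ) else 0) * 
        ((if m ≤ R then s.selbergTerms m else 0) / Ssum s R) := by
    intro d hd
    have hd' := Nat.dvd_of_mem_divisors hd
    have hnu := (nu_pos_of_dvd_prodPrimes hd').ne'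
    by_cases hld : l ∣ d
    · simp only [hld, if_true, true_and]
      unfold wt
      rw [if_pos hd', Finset.sum_div, Finset.mul_sum, Finset.mul_sum]
      apply Finset.sum_congr rfl
      intro m _
      by_cases h1 : d ∣ m <;> by_cases h2 : m ≤ R <;> simp [h1, h2]
      field_simp
    · simp [hld]
  rw [Finset.sum_congr rfl h1, Finset.sum_comm]
  simp_rw [← Finset.sum_mul]
  rw [Finset.sum_congr rfl (fun m hm => by 
    rw [moeb_aux s.prodPrimes l m s.prodPrimes_squarefree (Nat.dvd_of_mem_divisors hm) hl])]
  simp only [ite_mul, zero_mul]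
  rw [Finset.sum_ite_eq' , if_pos (by simp [hl, prodPrimes_ne_zero])]
  split_ifs <;> ring

lemma wt_main (s : BoundingSieve) (R : ℕ) (hR : 1 ≤ R) :
    s.mainSum (lambdaSquared (wt s R)) = 1 / Ssum s R := by
  have hS := Ssum_pos s R hR
  rw [mainSum_lambdaSquared_eq_sum_mul_sum_sq]
  have : ∀ l ∈ s.prodPrimes.divisors, (s.selbergTerms l)⁻¹ *
        (∑ d ∈ s.prodPrimes.divisors, if l ∣ d then s.nu d * wt s R d else 0) ^ 2 = 
        (if l ≤ R then s.selbergTerms l else 0) * (1 / Ssum s R ^ 2) := by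
    intro l hl
    have hl' := Nat.dvd_of_mem_divisors hl
    have hg := selbergTerms_pos hl'
    rw [wt_diag s R l hl']
    split_ifs with h
    · have hmu : ((μ l : ℤ) : ℝ) ^ 2 = 1 := by
        exact_mod_cast ArithmeticFunction.moebius_sq_eq_one_of_squarefree 
          (squarefree_of_dvd_prodPrimes hl')
      rw [div_pow, mul_pow, hmu]
      field_simp
    · simp
  rw [Finset.sum_congr rfl this, ← Finset.sum_mul]
  change Ssum s R * _ = _
  field_simp

lemma wt_err (s : BoundingSieve) (R : ℕ) (hR : 1 ≤ R)
    (hnu : ∀ d, d ∣ s.prodPrimes → (s.nu d)⁻¹ ≤ d)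
    (hrem : ∀ d, d ∣ s.prodPrimes → |s.rem d| ≤ d) :
    s.errSum (lambdaSquared (wt s R)) ≤ (R:ℝ)^8 := by
  have hw : ∀ d, d ∣ s.prodPrimes → |wt s R d| ≤ R := by
    intro d hd
    by_cases h : d ≤ R
    · calc _ ≤ _ := wt_abs_le s R hR d hd
        _ ≤ (d:ℝ) := hnu d hd
        _ ≤ R := by exact_mod_cast h
    · rw [wt_eq_zero s R d (by omega)]; simp
  have h1 : ∀ d, d ∣ s.prodPrimes → |lambdaSquared (wt s R) d| ≤ (R:ℝ)^4 := by
    intro d hd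
    have hc : ((d.divisors.filter (· ≤ R)).card : ℝ) ≤ R := by
      have : d.divisors.filter (· ≤ R) ⊆ Finset.Icc 1 R := by
        intro e he
        simp only [mem_filter] at he
        have := Nat.pos_of_mem_divisors he.1
        rw [Finset.mem_Icc]; omega
      have := Finset.card_le_card this
      simp only [Nat.card_Icc, Nat.add_sub_cancel] at this
      exact_mod_cast this
    unfold lambdaSquared
    calc _ ≤ ∑ d1 ∈ d.divisors, ∑ d2 ∈ d.divisors, 
          |if d = Nat.lcm d1 d2 then wt s R d1 * wt s R d2 else 0| := by
          refine (Finset.abs_sum_le_sum_abs _ _).trans ?_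
          apply Finset.sum_le_sum
          intro i _
          exact Finset.abs_sum_le_sum_abs _ _
      _ ≤ ∑ d1 ∈ d.divisors, ∑ d2 ∈ d.divisors, 
          (if d1 ≤ R then (R:ℝ) else 0) * (if d2 ≤ R then (R:ℝ) else 0) := by
          apply Finset.sum_le_sum
          intro d1 hd1
          apply Finset.sum_le_sum
          intro d2 hd2
          have a1 : |wt s R d1| ≤ if d1 ≤ R then (R:ℝ) else 0 := by
            split_ifs with h
            · exact hw _ ((Nat.dvd_of_mem_divisors hd1).trans hd)
            · rw [wt_eq_zero s R d1 (by omega)]; simp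
          have a2 : |wt s R d2| ≤ if d2 ≤ R then (R:ℝ) else 0 := by
            split_ifs with h
            · exact hw _ ((Nat.dvd_of_mem_divisors hd2).trans hd)
            · rw [wt_eq_zero s R d2 (by omega)]; simp
          have a3 : |wt s R d1| * |wt s R d2| ≤ (if d1 ≤ R then (R:ℝ) else 0) * (if d2 ≤ R then (R:ℝ) else 0) :=
            mul_le_mul a1 a2 (abs_nonneg _) ((abs_nonneg _).trans a1)
          by_cases hq : d = Nat.lcm d1 d2
          · rw [if_pos hq, abs_mul]; exact a3
          · rw [if_neg hq, abs_zero]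
            exact le_trans (by positivity) a3
      _ = (((d.divisors.filter (· ≤ R)).card : ℝ) * R) * (((d.divisors.filter (· ≤ R)).card : ℝ) * R) := by
          rw [← Finset.sum_mul_sum, ← Finset.sum_filter, Finset.sum_const, nsmul_eq_mul]
      _ ≤ (R * R) * (R * R) := by gcongr
      _ = _ := by ring
  have h2 : ∀ d, R^2 < d → lambdaSquared (wt s R) d = 0 := by
    intro d hd
    unfold lambdaSquared
    apply Finset.sum_eq_zero
    intro d1 hd1
    apply Finset.sum_eq_zero
    intro d2 hd2
    split_ifs with h
    · by_cases h3 : d1 ≤ R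
      · by_cases h4 : d2 ≤ R
        · exfalso
          have : Nat.lcm d1 d2 ≤ d1 * d2 := Nat.le_of_dvd 
            (Nat.mul_pos (Nat.pos_of_mem_divisors hd1) (Nat.pos_of_mem_divisors hd2)) (Nat.lcm_dvd_mul d1 d2)
          nlinarith
        · rw [wt_eq_zero s R d2 (by omega)]; simp
      · rw [wt_eq_zero s R d1 (by omega)]; simp
    · rfl
  unfold errSum
  calc _ ≤ ∑ d ∈ s.prodPrimes.divisors, if d ≤ R^2 then (R:ℝ)^4 * (R:ℝ)^2 else 0 := by
        apply Finset.sum_le_sum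
        intro d hd
        have hd' := Nat.dvd_of_mem_divisors hd
        split_ifs with h
        · have : |s.rem d| ≤ (R:ℝ)^2 := (hrem d hd').trans (by exact_mod_cast h)
          have := h1 d hd'
          gcongr
        · rw [h2 d (by omega)]; simp
    _ = ((s.prodPrimes.divisors.filter (· ≤ R^2)).card : ℝ) * ((R:ℝ)^4 * (R:ℝ)^2) := by
        rw [← Finset.sum_filter, Finset.sum_const, nsmul_eq_mul]
    _ ≤ (R:ℝ)^2 * ((R:ℝ)^4 * (R:ℝ)^2) := by
        gcongr
        have : s.prodPrimes.divisors.filter (· ≤ R^2) ⊆ Finset.Icc 1 (R^2) := by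
          intro e he
          simp only [mem_filter] at he
          have := Nat.pos_of_mem_divisors he.1
          rw [Finset.mem_Icc]; omega
        have := Finset.card_le_card this
        simp only [Nat.card_Icc, Nat.add_sub_cancel] at this
        exact_mod_cast this
    _ = _ := by ring

theorem selberg_bound (s : BoundingSieve) (R : ℕ) (hR : 1 ≤ R)
    (hnu : ∀ d, d ∣ s.prodPrimes → (s.nu d)⁻¹ ≤ d)
    (hrem : ∀ d, d ∣ s.prodPrimes → |s.rem d| ≤ d) :
    s.siftedSum ≤ s.totalMass / Ssum s R + (R:ℝ)^8 := by
  have h := siftedSum_le_mainSum_errSum_of_upperMoebius (s := s) _ 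
    (upperMoebius_lambdaSquared (wt s R) (wt_one s R hR))
  rw [wt_main s R hR] at h
  have := wt_err s R hR hnu hrem
  calc _ ≤ _ := h
    _ ≤ s.totalMass * (1 / Ssum s R) + (R:ℝ)^8 := by linarith
    _ = _ := by ring

end SelbAux

namespace SelbAux
open Finset

variable {ι : Type*} [Fintype ι]

noncomputable def rho (A B : ι → ℤ) (d : ℕ) : ℕ :=
  Nat.card {t : ZMod d // ∏ j, ((A j : ZMod d) * t + (B j : ZMod d)) = 0}

lemma rho_one (A B : ι → ℤ) : rho A B 1 = 1 := by
  unfold rho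
  rw [Nat.card_eq_one_iff_unique]
  refine ⟨⟨fun a b => Subtype.ext (Subsingleton.elim _ _)⟩, ⟨⟨0, Subsingleton.elim _ _⟩⟩⟩

lemma rho_mul (A B : ι → ℤ) {m n : ℕ} (h : m.Coprime n) : rho A B (m * n) = rho A B m * rho A B n := by
  unfold rho
  rw [← Nat.card_prod]
  apply Nat.card_congr
  let e := ZMod.chineseRemainder h
  refine Equiv.trans (Equiv.subtypeEquiv e.toEquiv (q := fun x : ZMod m × ZMod n => 
    (∏ j, ((A j : ZMod m) * x.1 + (B j : ZMod m)) = 0) ∧ (∏ j, ((A j : ZMod n) * x.2 + (B j : ZMod n)) = 0)) ?_) ?_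
  · intro t
    have h1 : e (∏ j, ((A j : ZMod (m*n)) * t + (B j : ZMod (m*n)))) = 
      ∏ j, ((A j : ZMod m × ZMod n) * e t + (B j : ZMod m × ZMod n)) := by
      simp [map_prod]
    rw [← map_eq_zero_iff e e.injective, h1, Prod.ext_iff, Prod.fst_prod, Prod.snd_prod]
    simp
  · exact Equiv.subtypeProdEquivProd (p := fun x : ZMod m => ∏ j, ((A j : ZMod m) * x + (B j : ZMod m)) = 0) (q := fun x : ZMod n => ∏ j, ((A j : ZMod n) * x + (B j : ZMod n)) = 0)

def GoodP (A B : ι → ℤ) (p : ℕ) : Prop :=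
  p.Prime ∧ (∀ j, ¬ (p:ℤ) ∣ A j) ∧ ∀ i j, i ≠ j → ¬ (p:ℤ) ∣ A i * B j - A j * B i

lemma rho_prime (A B : ι → ℤ) {p : ℕ} (hp : GoodP A B p) : rho A B p = Fintype.card ι := by
  obtain ⟨hp, h1, h2⟩ := hp
  have := Fact.mk hp
  unfold rho
  rw [← Nat.card_eq_fintype_card]
  symm
  have hA : ∀ j, (A j : ZMod p) ≠ 0 := by
    intro j h
    exact h1 j ((ZMod.intCast_zmod_eq_zero_iff_dvd _ _).1 h)
  apply Nat.card_congr
  refine Equiv.ofBijective (fun j => ⟨-(B j : ZMod p) / A j, ?_⟩) ⟨?_, ?_⟩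
  · apply Finset.prod_eq_zero (Finset.mem_univ j)
    have := hA j
    field_simp; ring
  · intro i j hij
    by_contra hne
    apply h2 i j hne
    rw [← ZMod.intCast_zmod_eq_zero_iff_dvd]
    have h3 := congrArg Subtype.val hij
    simp only at h3
    have := hA i
    have := hA j
    field_simp at h3
    push_cast
    linear_combination h3
  · rintro ⟨t, ht⟩
    obtain ⟨j, _, hj⟩ := Finset.prod_eq_zero_iff.1 ht
    refine ⟨j, Subtype.ext ?_⟩
    have := hA j
    simp only
    field_simp
    linear_combination -hj

lemma rho_le (A B : ι → ℤ) {d : ℕ} (hd : d ≠ 0) : rho A B d ≤ d := by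
  have := NeZero.mk hd
  unfold rho
  calc _ ≤ Nat.card (ZMod d) := Finite.card_subtype_le _
    _ = d := Nat.card_zmod d

noncomputable def rhoA (A B : ι → ℤ) : ArithmeticFunction ℕ := ⟨fun d => if d = 0 then 0 else rho A B d, by simp⟩

lemma rhoA_mult (A B : ι → ℤ) : (rhoA A B).IsMultiplicative := by
  rw [ArithmeticFunction.IsMultiplicative.iff_ne_zero]
  constructor
  · simp [rhoA, rho_one]
  · intro m n hm hn h
    simp [rhoA, hm, hn, rho_mul A B h]

lemma rho_sqf (A B : ι → ℤ) {d : ℕ} (hd : Squarefree d) (hg : ∀ p, p.Prime → p ∣ d → GoodP A B p) :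
    (rho A B d : ℝ) / d = ∏ p ∈ d.primeFactors, ((Fintype.card ι : ℝ) / p) := by
  have h0 := hd.ne_zero
  have h1 : rho A B d = ∏ p ∈ d.primeFactors, Fintype.card ι := by
    have h2 : rhoA A B d = rho A B d := by simp [rhoA, h0]
    rw [← h2]
    conv_lhs => rw [← Nat.prod_primeFactors_of_squarefree hd]
    rw [(rhoA_mult A B).map_prod_of_subset_primeFactors _ _ subset_rfl]
    apply Finset.prod_congr rfl
    intro p hp
    have hp' := Nat.prime_of_mem_primeFactors hp
    rw [← rho_prime A B (hg p hp' (Nat.dvd_of_mem_primeFactors hp))]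
    simp [rhoA, hp'.ne_zero]
  rw [Finset.prod_div_distrib, h1]
  congr 1
  · push_cast; rfl
  · conv_lhs => rw [← Nat.prod_primeFactors_of_squarefree hd]
    push_cast; rfl

lemma count_bd (A B : ι → ℤ) {d : ℕ} (hd : d ≠ 0) (X : ℕ) :
    |((((Finset.range X).filter (fun n : ℕ => (d:ℤ) ∣ ∏ j, (A j * n + B j))).card : ℝ)) 
      - (rho A B d : ℝ) / d * X| ≤ d := by
  classical
  have := NeZero.mk hd
  set T : Finset (ZMod d) := Finset.univ.filter (fun t => ∏ j, ((A j : ZMod d) * t + (B j : ZMod d)) = 0) with hT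
  have hTc : T.card = rho A B d := by
    unfold rho
    rw [Nat.card_eq_fintype_card, Fintype.card_subtype]
  have h1 : ((Finset.range X).filter (fun n : ℕ => (d:ℤ) ∣ ∏ j, (A j * n + B j))).card = 
     ∑ t ∈ T, ((Finset.range X).filter (fun n : ℕ => n ≡ t.val [MOD d])).card := by
    rw [Finset.card_eq_sum_card_fiberwise (f := fun n : ℕ => (n : ZMod d)) (t := T)]
    · apply Finset.sum_congr rfl
      intro t ht
      congr 1
      ext n
      simp only [mem_filter, mem_range]
      have e1 : n ≡ t.val [MOD d] ↔ (n : ZMod d) = t := by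
        rw [← ZMod.natCast_eq_natCast_iff]; simp
      rw [e1]
      constructor
      · rintro ⟨⟨a, _⟩, c⟩; exact ⟨a, c⟩
      · rintro ⟨a, c⟩
        refine ⟨⟨a, ?_⟩, c⟩
        rw [← ZMod.intCast_zmod_eq_zero_iff_dvd]
        push_cast
        rw [c]
        exact (Finset.mem_filter.1 ht).2
    · intro n hn
      have hn := (Finset.mem_filter.1 hn).2
      rw [← ZMod.intCast_zmod_eq_zero_iff_dvd] at hn
      push_cast at hn
      simp [hT, hn]
  have h2 : ∀ t : ZMod d, |(((Finset.range X).filter (fun n : ℕ => n ≡ t.val [MOD d])).card : ℝ) - (X:ℝ)/d| ≤ 1 := by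
    intro t
    rw [← Nat.count_eq_card_filter_range, Nat.count_modEq_card X (Nat.pos_of_ne_zero hd)]
    have hd0 : (0:ℝ) < d := by exact_mod_cast Nat.pos_of_ne_zero hd
    have a1 := Nat.lt_floor_add_one ((X:ℝ)/d)
    have a2 := Nat.floor_le (show 0 ≤ (X:ℝ)/d by positivity)
    rw [Nat.floor_div_eq_div] at a1 a2
    rw [abs_le]
    split_ifs <;> constructor <;> push_cast <;> linarith
  rw [h1]
  push_cast
  have h3 : (rho A B d : ℝ) / d * X = ∑ t ∈ T, (X:ℝ)/d := by
    rw [Finset.sum_const, hTc, nsmul_eq_mul]; ring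
  rw [h3, ← Finset.sum_sub_distrib]
  calc _ ≤ ∑ t ∈ T, (1:ℝ) := (Finset.abs_sum_le_sum_abs _ _).trans (Finset.sum_le_sum (fun t _ => h2 t))
    _ = rho A B d := by simp [hTc]
    _ ≤ d := by exact_mod_cast rho_le A B hd
end SelbAux

namespace SelbAux
open Finset BoundingSieve
variable {ι : Type*} [Fintype ι]

lemma sqf_prod (P : Finset ℕ) (hP : ∀ p ∈ P, p.Prime) : Squarefree (∏ p ∈ P, p) := by
  refine Finset.squarefree_prod_of_pairwise_isCoprime (fun _ hp _ hq hpq => ?_)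
    fun _ hp => (hP _ hp).squarefree
  simp only [← Nat.coprime_iff_isRelPrime]
  exact (Nat.coprime_primes (hP _ hp) (hP _ hq)).mpr hpq

lemma dvd_prod_primes (P : Finset ℕ) (hP : ∀ p ∈ P, p.Prime) {p : ℕ} (hp : p.Prime) (h : p ∣ ∏ q ∈ P, q) : p ∈ P := by
  obtain ⟨q, hq, hpq⟩ := (Prime.dvd_finsetProd_iff hp.prime _).1 h
  rwa [(Nat.prime_dvd_prime_iff_eq hp (hP q hq)).1 hpq]

noncomputable def mkSieve (A B : ι → ℤ) (P : Finset ℕ) (X : ℕ) [Nonempty ι]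
    (hP : ∀ p ∈ P, GoodP A B p ∧ Fintype.card ι < p) : BoundingSieve where
  support := (range X).image (fun n : ℕ => (∏ j, (A j * n + B j)).natAbs)
  prodPrimes := ∏ p ∈ P, p
  prodPrimes_squarefree := sqf_prod P (fun p hp => (hP p hp).1.1)
  weights := fun m => (((range X).filter (fun n : ℕ => (∏ j, (A j * n + B j)).natAbs = m)).card : ℝ)
  weights_nonneg := fun _ => by positivity
  totalMass := X
  nu := ArithmeticFunction.prodPrimeFactors (fun p => (Fintype.card ι : ℝ) / p)
  nu_mult := ArithmeticFunction.IsMultiplicative.prodPrimeFactors _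
  nu_pos_of_prime := by
    intro p hp _
    rw [ArithmeticFunction.prodPrimeFactors_apply hp.ne_zero, hp.primeFactors]
    have := hp.pos
    have : 0 < Fintype.card ι := Fintype.card_pos
    simp; positivity
  nu_lt_one_of_prime := by
    intro p hp h
    rw [ArithmeticFunction.prodPrimeFactors_apply hp.ne_zero, hp.primeFactors]
    have h1 := (hP p (dvd_prod_primes P (fun p hp => (hP p hp).1.1) hp h)).2
    have : (0:ℝ) < p := by exact_mod_cast hp.pos
    simp only [prod_singleton]
    rw [div_lt_one this]
    exact_mod_cast h1

noncomputable def Ssum2 (κ : ℕ) (P : Finset ℕ) (R : ℕ) : ℝ :=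
  ∑ l ∈ (∏ p ∈ P, p).divisors, if l ≤ R then ∏ p ∈ l.primeFactors, ((κ:ℝ) / (p - κ)) else 0

theorem sieve_app (A B : ι → ℤ) (P : Finset ℕ) (X : ℕ) [Nonempty ι]
    (hP : ∀ p ∈ P, GoodP A B p ∧ Fintype.card ι < p) (R : ℕ) (hR : 1 ≤ R) :
    (((range X).filter (fun n : ℕ => ∀ p ∈ P, ¬ (p:ℤ) ∣ ∏ j, (A j * n + B j))).card : ℝ) ≤
      X / Ssum2 (Fintype.card ι) P R + (R:ℝ)^8 := by
  set s := mkSieve A B P X hP with hs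
  have hPp : ∀ p ∈ P, p.Prime := fun p hp => (hP p hp).1.1
  have hprod : s.prodPrimes = ∏ p ∈ P, p := rfl
  have hnuv : ∀ d, d ∣ s.prodPrimes → s.nu d = (rho A B d : ℝ) / d := by
    intro d hd
    have hsq := squarefree_of_dvd_prodPrimes hd
    rw [rho_sqf A B hsq]
    · exact ArithmeticFunction.prodPrimeFactors_apply hsq.ne_zero
    · intro p hp hpd
      exact (hP p (dvd_prod_primes P hPp hp (hpd.trans hd))).1
  have hmult : ∀ d : ℕ, s.multSum d = (((range X).filter (fun n : ℕ => (d:ℤ) ∣ ∏ j, (A j * n + B j))).card : ℝ) := by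
    intro d
    rw [multSum, Finset.card_eq_sum_card_fiberwise (f := fun n : ℕ => (∏ j, (A j * n + B j)).natAbs) (t := s.support)]
    · push_cast
      apply Finset.sum_congr rfl
      intro m _
      split_ifs with h
      · show (((range X).filter (fun n : ℕ => (∏ j, (A j * n + B j)).natAbs = m)).card : ℝ) = _
        congr 2
        ext n
        simp only [mem_filter, mem_range]
        constructor
        · rintro ⟨h1, h2⟩
          refine ⟨⟨h1, ?_⟩, h2⟩
          rw [← Int.natCast_dvd_natCast, ← h2] at h
          simpa using h
        · rintro ⟨⟨h1, _⟩, h2⟩; exact ⟨h1, h2⟩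
      · symm
        rw [Nat.cast_eq_zero, Finset.card_eq_zero, Finset.filter_eq_empty_iff]
        intro n hn h2
        apply h
        rw [← h2, ← Int.natCast_dvd]
        exact (Finset.mem_filter.1 hn).2
    · intro n hn
      exact Finset.mem_image_of_mem _ (Finset.mem_filter.1 hn).1
  have hsift : s.siftedSum = (((range X).filter (fun n : ℕ => ∀ p ∈ P, ¬ (p:ℤ) ∣ ∏ j, (A j * n + B j))).card : ℝ) := by
    rw [siftedSum, Finset.card_eq_sum_card_fiberwise (f := fun n : ℕ => (∏ j, (A j * n + B j)).natAbs) (t := s.support)]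
    · push_cast
      apply Finset.sum_congr rfl
      intro m _
      have hcop : Nat.Coprime s.prodPrimes m ↔ ∀ p ∈ P, ¬ p ∣ m := by
        rw [hprod, Nat.coprime_prod_left_iff]
        constructor
        · intro h p hp
          exact (Nat.Prime.coprime_iff_not_dvd (hPp p hp)).1 (h p hp)
        · intro h p hp
          exact (Nat.Prime.coprime_iff_not_dvd (hPp p hp)).2 (h p hp)
      split_ifs with h
      · rw [hcop] at h
        show (((range X).filter (fun n : ℕ => (∏ j, (A j * n + B j)).natAbs = m)).card : ℝ) = _
        congr 2
        ext n
        simp only [mem_filter, mem_range]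
        constructor
        · rintro ⟨h1, h2⟩
          refine ⟨⟨h1, ?_⟩, h2⟩
          intro p hp hd
          rw [Int.natCast_dvd, h2] at hd
          exact h p hp hd
        · rintro ⟨⟨h1, _⟩, h2⟩; exact ⟨h1, h2⟩
      · symm
        rw [Nat.cast_eq_zero, Finset.card_eq_zero, Finset.filter_eq_empty_iff]
        intro n hn h2
        apply h
        rw [hcop]
        intro p hp hd
        rw [← h2, ← Int.natCast_dvd] at hd
        exact (Finset.mem_filter.1 hn).2 p hp hd
    · intro n hn
      exact Finset.mem_image_of_mem _ (Finset.mem_filter.1 hn).1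
  have hS : Ssum s R = Ssum2 (Fintype.card ι) P R := by
    unfold Ssum Ssum2
    apply Finset.sum_congr rfl
    intro l hl
    have hl' := Nat.dvd_of_mem_divisors hl
    have hl0 := (squarefree_of_dvd_prodPrimes hl').ne_zero
    congr 1
    rw [selbergTerms_apply]
    have e1 : s.nu l = ∏ p ∈ l.primeFactors, ((Fintype.card ι : ℝ) / p) :=
      ArithmeticFunction.prodPrimeFactors_apply hl0
    rw [e1, ← Finset.prod_mul_distrib]
    apply Finset.prod_congr rfl
    intro p hp
    have hpp := Nat.prime_of_mem_primeFactors hp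
    have e2 : s.nu p = (Fintype.card ι : ℝ) / p := by
      have : s.nu p = ∏ p ∈ p.primeFactors, ((Fintype.card ι : ℝ) / p) :=
        ArithmeticFunction.prodPrimeFactors_apply hpp.ne_zero
      rw [this, hpp.primeFactors]; simp
    rw [e2]
    have h1 := (hP p (dvd_prod_primes P hPp hpp ((Nat.dvd_of_mem_primeFactors hp).trans hl'))).2
    have h2 : (Fintype.card ι : ℝ) < p := by exact_mod_cast h1
    have h3 : (p:ℝ) - Fintype.card ι ≠ 0 := by linarith
    have h4 : (p:ℝ) ≠ 0 := by exact_mod_cast hpp.ne_zero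
    rw [one_sub_div h4, inv_div]
    field_simp
  have hmain := selberg_bound s R hR ?_ ?_
  · rw [hsift, hS] at hmain
    exact hmain
  · intro d hd
    have hd0 : 0 < d := Nat.pos_of_ne_zero (squarefree_of_dvd_prodPrimes hd).ne_zero
    have h1 := nu_pos_of_dvd_prodPrimes hd
    rw [hnuv d hd] at h1 ⊢
    have hd1 : (0:ℝ) < d := by exact_mod_cast hd0
    have h2 : 1 ≤ rho A B d := by
      by_contra hc
      have : rho A B d = 0 := by omega
      simp [this] at h1
    have h3 : (1:ℝ) ≤ rho A B d := by exact_mod_cast h2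
    rw [inv_div, div_le_iff₀ (by linarith)]
    nlinarith
  · intro d hd
    rw [rem, hmult, hnuv d hd]
    exact count_bd A B (squarefree_of_dvd_prodPrimes hd).ne_zero X

theorem rankin (κ : ℕ) (P : Finset ℕ) (R : ℕ) (hR : 1 ≤ R) (L C : ℝ) (hL : 0 < L)
    (hP : ∀ p ∈ P, p.Prime ∧ 2 * κ ≤ p ∧ κ < p ∧ Real.log p ≤ L)
    (hsum : ∑ p ∈ P, Real.log p / p ≤ C * L)
    (hRL : (4 * κ * C + 1) * L ≤ Real.log R) :
    (1/2) * Real.exp (κ * ∑ p ∈ P, (1:ℝ)/p) ≤ Ssum2 κ P R := by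
  have hPp : ∀ p ∈ P, p.Prime := fun p hp => (hP p hp).1
  set Q := ∏ p ∈ P, p with hQ
  have hsq : Squarefree Q := sqf_prod P hPp
  have hpf : Q.primeFactors = P := by
    ext p
    rw [Nat.mem_primeFactors]
    constructor
    · rintro ⟨h1, h2, _⟩; exact dvd_prod_primes P hPp h1 h2
    · intro h; exact ⟨hPp p h, Finset.dvd_prod_of_mem _ h, hsq.ne_zero⟩
  set ε := 1 / L with hε
  have hε0 : 0 < ε := by positivity
  let g : ℕ → ℝ := fun p => (κ:ℝ) / (p - κ)
  let f1 := ArithmeticFunction.prodPrimeFactors g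
  let f2 := ArithmeticFunction.prodPrimeFactors (fun p => g p * (p:ℝ)^ε)
  have hg0 : ∀ p ∈ P, 0 ≤ g p := by
    intro p hp
    have : (κ:ℝ) < p := by exact_mod_cast (hP p hp).2.2.1
    show 0 ≤ (κ:ℝ) / (p - κ)
    apply div_nonneg (by positivity); linarith
  have hf1 : ∏ p ∈ P, (1 + g p) = ∑ d ∈ Q.divisors, f1 d := by
    have := ArithmeticFunction.IsMultiplicative.prodPrimeFactors_one_add_of_squarefree 
      (ArithmeticFunction.IsMultiplicative.prodPrimeFactors g) hsq
    rw [← this, hpf]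
    apply Finset.prod_congr rfl
    intro p hp
    rw [ArithmeticFunction.prodPrimeFactors_apply (hPp p hp).ne_zero, (hPp p hp).primeFactors]; simp [g]
  have hf2 : ∏ p ∈ P, (1 + g p * (p:ℝ)^ε) = ∑ d ∈ Q.divisors, f2 d := by
    have := ArithmeticFunction.IsMultiplicative.prodPrimeFactors_one_add_of_squarefree 
      (ArithmeticFunction.IsMultiplicative.prodPrimeFactors (fun p => g p * (p:ℝ)^ε)) hsq
    rw [← this, hpf]
    apply Finset.prod_congr rfl
    intro p hp
    rw [ArithmeticFunction.prodPrimeFactors_apply (hPp p hp).ne_zero, (hPp p hp).primeFactors]; simp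
  have hf12 : ∀ d ∈ Q.divisors, f2 d = f1 d * (d:ℝ)^ε := by
    intro d hd
    have hdsq := hsq.squarefree_of_dvd (Nat.dvd_of_mem_divisors hd)
    show ArithmeticFunction.prodPrimeFactors _ d = ArithmeticFunction.prodPrimeFactors _ d * _
    rw [ArithmeticFunction.prodPrimeFactors_apply hdsq.ne_zero, 
      ArithmeticFunction.prodPrimeFactors_apply hdsq.ne_zero, Finset.prod_mul_distrib]
    congr 1
    rw [Real.finsetProd_rpow _ _ (fun i _ => by positivity)]
    congr 1
    conv_rhs => rw [← Nat.prod_primeFactors_of_squarefree hdsq]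
    push_cast; rfl
  have hf10 : ∀ d ∈ Q.divisors, 0 ≤ f1 d := by
    intro d hd
    have hd0 : d ≠ 0 := (Nat.pos_of_mem_divisors hd).ne'
    show 0 ≤ ArithmeticFunction.prodPrimeFactors _ d
    rw [ArithmeticFunction.prodPrimeFactors_apply hd0]
    apply Finset.prod_nonneg
    intro p hp
    apply hg0
    rw [← hpf]
    exact Nat.primeFactors_mono (Nat.dvd_of_mem_divisors hd) hsq.ne_zero hp
  have hR0 : (0:ℝ) < R := by exact_mod_cast hR
  set r := (R:ℝ)^(-ε) with hr
  have hr0 : 0 < r := by positivity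
  have hS : (∑ d ∈ Q.divisors, f1 d) - r * ∑ d ∈ Q.divisors, f2 d ≤ Ssum2 κ P R := by
    unfold Ssum2
    rw [Finset.mul_sum, ← Finset.sum_sub_distrib]
    apply Finset.sum_le_sum
    intro d hd
    have hd0 : d ≠ 0 := (Nat.pos_of_mem_divisors hd).ne'
    have hd1 : (0:ℝ) < d := by exact_mod_cast (Nat.pos_of_mem_divisors hd)
    rw [hf12 d hd]
    have h0 := hf10 d hd
    split_ifs with h
    · have : f1 d = ∏ p ∈ d.primeFactors, ((κ:ℝ) / (p - κ)) := ArithmeticFunction.prodPrimeFactors_apply hd0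
      rw [← this]
      have : 0 ≤ r * (f1 d * (d:ℝ)^ε) := by positivity
      linarith
    · have h1 : (R:ℝ)^ε ≤ (d:ℝ)^ε := by
        have : (R:ℝ) ≤ d := by exact_mod_cast (by omega : R ≤ d)
        gcongr
      have h2 : 1 ≤ r * (d:ℝ)^ε := by
        calc (1:ℝ) = r * (R:ℝ)^ε := by rw [hr, ← Real.rpow_add hR0]; simp
          _ ≤ _ := by gcongr
      nlinarith
  have hratio : ∏ p ∈ P, (1 + g p * (p:ℝ)^ε) ≤ (∏ p ∈ P, (1 + g p)) * Real.exp (4 * κ * C) := by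
    calc _ ≤ ∏ p ∈ P, ((1 + g p) * Real.exp (4 * κ / L * (Real.log p / p))) := by
          apply Finset.prod_le_prod
          · intro p hp
            have := hg0 p hp
            positivity
          · intro p hp
            obtain ⟨hp1, hp2, hp3, hp4⟩ := hP p hp
            have hp0 : (0:ℝ) < p := by exact_mod_cast hp1.pos
            have hlp : 0 ≤ Real.log p := Real.log_natCast_nonneg p
            have hk2 : (2:ℝ) * κ ≤ p := by exact_mod_cast hp2
            have hk3 : (κ:ℝ) < p := by exact_mod_cast hp3
            have hgp := hg0 p hp
            have hg2 : g p ≤ 2 * κ / p := by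
              show (κ:ℝ) / (p - κ) ≤ 2 * κ / p
              rw [div_le_div_iff₀ (by linarith) hp0]
              have : (0:ℝ) ≤ κ := by positivity
              nlinarith
            have hpe : (p:ℝ)^ε - 1 ≤ 2 * (Real.log p / L) := by
              rw [Real.rpow_def_of_pos hp0]
              have ht : |Real.log p * ε| ≤ 1 := by
                rw [abs_of_nonneg (by positivity), hε, mul_one_div, div_le_one hL]; exact hp4
              have := (abs_le.1 (Real.abs_exp_sub_one_le ht)).2
              rw [abs_of_nonneg (by positivity)] at this
              calc _ ≤ _ := this
                _ = _ := by rw [hε]; ring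
            have hpe0 : 0 ≤ (p:ℝ)^ε - 1 := by
              have : (1:ℝ) ≤ (p:ℝ)^ε := Real.one_le_rpow (by exact_mod_cast hp1.one_lt.le) hε0.le
              linarith
            calc 1 + g p * (p:ℝ)^ε ≤ (1 + g p) * (1 + g p * ((p:ℝ)^ε - 1)) := by
                  have : 0 ≤ g p * (g p * ((p:ℝ)^ε - 1)) := by positivity
                  nlinarith
              _ ≤ (1 + g p) * Real.exp (4 * κ / L * (Real.log p / p)) := by
                  gcongr
                  calc 1 + g p * ((p:ℝ)^ε - 1) ≤ 1 + (2 * κ / p) * (2 * (Real.log p / L)) := by gcongr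
                    _ = (4 * κ / L * (Real.log p / p)) + 1 := by ring
                    _ ≤ _ := Real.add_one_le_exp _
      _ = (∏ p ∈ P, (1 + g p)) * Real.exp (4 * κ / L * ∑ p ∈ P, (Real.log p / p)) := by
          rw [Finset.prod_mul_distrib, ← Real.exp_sum, Finset.mul_sum]
      _ ≤ _ := by
          have : 0 ≤ ∏ p ∈ P, (1 + g p) := Finset.prod_nonneg (fun p hp => by have := hg0 p hp; positivity)
          have h9 : 4 * κ / L * ∑ p ∈ P, (Real.log p / p) ≤ 4 * κ * C := by
            calc 4 * κ / L * ∑ p ∈ P, (Real.log p / p) ≤ 4 * κ / L * (C * L) := 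
                  mul_le_mul_of_nonneg_left hsum (by positivity)
              _ = _ := by field_simp
          exact mul_le_mul_of_nonneg_left (Real.exp_le_exp.2 h9) this
  have hrr : r * Real.exp (4 * κ * C) ≤ 1/2 := by
    rw [hr, Real.rpow_def_of_pos hR0, ← Real.exp_add]
    have h1 : (4 * κ * C + 1) ≤ Real.log R * ε := by
      rw [hε, mul_one_div, le_div_iff₀ hL]; exact hRL
    calc _ ≤ Real.exp (-1) := by apply Real.exp_le_exp.2; linarith
      _ ≤ 1/2 := by
        rw [Real.exp_neg, one_div]
        apply inv_anti₀ (by norm_num)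
        linarith [Real.exp_one_gt_d9]
  have hG : Real.exp (κ * ∑ p ∈ P, (1:ℝ)/p) ≤ ∏ p ∈ P, (1 + g p) := by
    rw [Finset.mul_sum, Real.exp_sum]
    apply Finset.prod_le_prod
    · intros; positivity
    · intro p hp
      have hp0 : (0:ℝ) < p := by exact_mod_cast (hPp p hp).pos
      have hk3 : (κ:ℝ) < p := by exact_mod_cast (hP p hp).2.2.1
      have e : 1 + g p = (1 - (κ:ℝ) * (1/(p:ℝ)))⁻¹ := by
        show 1 + (κ:ℝ) / (p - κ) = _
        have : (p:ℝ) - κ ≠ 0 := by linarith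
        rw [mul_one_div, one_sub_div hp0.ne', inv_div]
        field_simp; ring
      rw [e, le_inv_comm₀ (by positivity), ← Real.exp_neg]
      · linarith [Real.add_one_le_exp (-(κ * (1/(p:ℝ))))]
      · rw [mul_one_div, sub_pos, div_lt_one hp0]; exact hk3
  rw [← hf1, ← hf2] at hS
  have hGp : 0 ≤ ∏ p ∈ P, (1 + g p) := le_trans (by positivity) hG
  calc _ ≤ (1/2) * ∏ p ∈ P, (1 + g p) := by gcongr
    _ ≤ ∏ p ∈ P, (1 + g p) - r * ((∏ p ∈ P, (1 + g p)) * Real.exp (4 * κ * C)) := by nlinarith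
    _ ≤ ∏ p ∈ P, (1 + g p) - r * ∏ p ∈ P, (1 + g p * (p:ℝ)^ε) := by gcongr
    _ ≤ _ := hS

theorem sieve_final (A B : ι → ℤ) (P : Finset ℕ) (X : ℕ) [Nonempty ι] (R : ℕ) (hR : 1 ≤ R) (L C : ℝ) (hL : 0 < L)
    (hP : ∀ p ∈ P, GoodP A B p ∧ 2 * Fintype.card ι ≤ p ∧ Real.log p ≤ L)
    (hsum : ∑ p ∈ P, Real.log p / p ≤ C * L)
    (hRL : (4 * Fintype.card ι * C + 1) * L ≤ Real.log R) :
    (((range X).filter (fun n : ℕ => ∀ p ∈ P, ¬ (p:ℤ) ∣ ∏ j, (A j * n + B j))).card : ℝ) ≤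
      2 * X * Real.exp (- (Fintype.card ι * ∑ p ∈ P, (1:ℝ)/p)) + (R:ℝ)^8 := by
  have hk : 0 < Fintype.card ι := Fintype.card_pos
  have h1 := sieve_app A B P X (fun p hp => ⟨(hP p hp).1, by have := (hP p hp).2.1; omega⟩) R hR
  have h2 := rankin (Fintype.card ι) P R hR L C hL (fun p hp => 
    ⟨(hP p hp).1.1, (hP p hp).2.1, by have := (hP p hp).2.1; omega, (hP p hp).2.2⟩) hsum hRL
  refine h1.trans ?_
  gcongr
  calc (X:ℝ) / Ssum2 (Fintype.card ι) P R ≤ X / ((1/2) * Real.exp (Fintype.card ι * ∑ p ∈ P, (1:ℝ)/p)) := by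
        gcongr
    _ = _ := by rw [Real.exp_neg]; field_simp

end SelbAux
section
open Finset

lemma bad_sum (Q : Finset ℕ) (z : ℝ) (hz : 1 < z) (D : ℕ) (hD : D ≠ 0)
    (hQ : ∀ p ∈ Q, p.Prime ∧ z < p ∧ p ∣ D) :
    ∑ p ∈ Q, (1:ℝ)/p ≤ Real.log D / (z * Real.log z) := by
  have hlz := Real.log_pos hz
  have h1 : ∏ p ∈ Q, p ∣ D := by
    apply Finset.prod_primes_dvd
    · intro p hp; exact (hQ p hp).1.prime
    · intro p hp; exact (hQ p hp).2.2
  have h2 : z ^ Q.card ≤ D := by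
    calc z ^ Q.card = ∏ p ∈ Q, z := by simp
      _ ≤ ∏ p ∈ Q, (p:ℝ) := Finset.prod_le_prod (fun _ _ => by linarith) (fun p hp => (hQ p hp).2.1.le)
      _ = ((∏ p ∈ Q, p : ℕ) : ℝ) := by push_cast; rfl
      _ ≤ D := by exact_mod_cast Nat.le_of_dvd (Nat.pos_of_ne_zero hD) h1
  have h3 : (Q.card : ℝ) * Real.log z ≤ Real.log D := by
    rw [← Real.log_pow]
    exact Real.log_le_log (by positivity) h2
  calc ∑ p ∈ Q, (1:ℝ)/p ≤ ∑ p ∈ Q, 1 / z := by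
        apply Finset.sum_le_sum
        intro p hp
        exact one_div_le_one_div_of_le (by linarith) (hQ p hp).2.1.le
    _ = Q.card / z := by simp [div_eq_mul_inv]
    _ ≤ _ := by
      rw [div_le_div_iff₀ (by linarith) (by positivity)]
      nlinarith

lemma S_lower (W : ℕ) (z w : ℝ) (hW : W = ⌊w⌋₊) (hw : 4 ≤ w) (hz : 3 ≤ z) (hlz : 1 ≤ Real.log z) (D : ℕ) (hD : D ≠ 0)
    (K L₀ : ℝ) (hK : 0 ≤ K) (hDl : Real.log D ≤ K * L₀) (hzL : z = L₀ / 3) (δ : ℝ) (hδ : 0 < δ) (hwl : Real.log w = δ * L₀) :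
    Real.log L₀ - Real.log (Real.log z) - (5 + 3 * K - Real.log (δ/2)) ≤
      ∑ p ∈ (W+1).primesBelow.filter (fun p : ℕ => z < (p:ℝ) ∧ ¬ p ∣ D), (1:ℝ)/p := by
  have hL : 0 < L₀ := by linarith
  have hsub : (W+1).primesBelow ⊆ ((W+1).primesBelow.filter (fun p : ℕ => z < (p:ℝ) ∧ ¬ p ∣ D) ∪ (⌊z⌋₊+1).primesBelow) ∪
      (W+1).primesBelow.filter (fun p : ℕ => z < (p:ℝ) ∧ p ∣ D) := by
    intro p hp
    by_cases h1 : z < (p:ℝ)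
    · by_cases h2 : p ∣ D
      · simp only [mem_union, mem_filter]; tauto
      · simp only [mem_union, mem_filter]; tauto
    · rw [mem_union, mem_union]; left; right
      rw [Nat.mem_primesBelow] at hp ⊢
      exact ⟨Nat.lt_succ_of_le (Nat.le_floor (by linarith)), hp.2⟩
  have hW2 : 4 ≤ W := by rw [hW]; exact Nat.le_floor (by exact_mod_cast hw)
  have h1 := mert_lower W (by omega)
  have h2 := mert_upper ⌊z⌋₊ (Nat.le_floor (by exact_mod_cast hz))
  have h3 := bad_sum ((W+1).primesBelow.filter (fun p : ℕ => z < (p:ℝ) ∧ p ∣ D)) z (by linarith) D hD (by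
    intro p hp
    rw [mem_filter, Nat.mem_primesBelow] at hp
    exact ⟨hp.1.2, hp.2⟩)
  have h4 : Real.log D / (z * Real.log z) ≤ 3 * K := by
    rw [div_le_iff₀ (by positivity)]
    calc Real.log D ≤ K * L₀ := hDl
      _ = 3 * K * (z * 1) := by rw [hzL]; ring
      _ ≤ _ := by gcongr
  have h5 : ∑ p ∈ (W+1).primesBelow, (1:ℝ)/p ≤ (∑ p ∈ (W+1).primesBelow.filter (fun p : ℕ => z < (p:ℝ) ∧ ¬ p ∣ D), (1:ℝ)/p + ∑ p ∈ (⌊z⌋₊+1).primesBelow, (1:ℝ)/p) + ∑ p ∈ (W+1).primesBelow.filter (fun p : ℕ => z < (p:ℝ) ∧ p ∣ D), (1:ℝ)/p := by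
    have hu : ∀ s t : Finset ℕ, ∑ p ∈ s ∪ t, (1:ℝ)/p ≤ ∑ p ∈ s, (1:ℝ)/p + ∑ p ∈ t, (1:ℝ)/p := by
      intro s t
      rw [← Finset.sum_union_inter]
      have : 0 ≤ ∑ p ∈ s ∩ t, (1:ℝ)/p := Finset.sum_nonneg (fun _ _ => by positivity)
      linarith
    refine (Finset.sum_le_sum_of_subset_of_nonneg hsub (fun _ _ _ => by positivity)).trans ?_
    refine (hu _ _).trans ?_
    have := hu ((W+1).primesBelow.filter (fun p : ℕ => z < (p:ℝ) ∧ ¬ p ∣ D)) (⌊z⌋₊+1).primesBelow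
    linarith
  have h6 : Real.log (Real.log ⌊z⌋₊) ≤ Real.log (Real.log z) := by
    have h3' : (3:ℝ) ≤ ⌊z⌋₊ := by exact_mod_cast Nat.le_floor (by exact_mod_cast hz)
    have : 0 < Real.log (⌊z⌋₊:ℝ) := Real.log_pos (by linarith)
    apply Real.log_le_log this
    apply Real.log_le_log (by linarith)
    exact Nat.floor_le (by linarith)
  have h7 : Real.log L₀ + Real.log (δ/2) ≤ Real.log (Real.log W) := by
    rw [← Real.log_mul hL.ne' (by positivity)]
    apply Real.log_le_log (by positivity)
    have hwf : w < W + 1 := by rw [hW]; exact Nat.lt_floor_add_one w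
    have hWr : (4:ℝ) ≤ W := by exact_mod_cast hW2
    have : w ≤ (W:ℝ)^2 := by nlinarith
    have h8 : Real.log w ≤ 2 * Real.log W := by
      have := Real.log_le_log (by linarith) this
      rwa [Real.log_pow] at this
    rw [hwl] at h8
    linarith
  linarith


theorem core_fixed {ι : Type*} [Fintype ι] [Nonempty ι] (δ K : ℝ)
    (hδ : δ = 1 / (64 * (12 * (Fintype.card ι : ℝ) + 1))) (hK : 0 ≤ K) (N : ℕ)
    (e1 : 4 ≤ (N:ℝ) ^ δ) (e2 : 9 ≤ Real.log N) (e3 : 1 ≤ Real.log (Real.log N / 3))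
    (e4 : 2 * (Fintype.card ι : ℝ) ≤ Real.log N / 3)
    (e5 : (Real.log N) ^ (Fintype.card ι) ≤ (N:ℝ) ^ ((1:ℝ)/8)) (e6 : 256 ≤ (N:ℝ) ^ ((1:ℝ)/8))
    (M : ℕ) (hM : 1 ≤ M) (hMN : (M:ℝ) ≤ (N:ℝ) ^ ((1:ℝ)/2)) (A B : ι → ℤ) (D : ℕ) (hD : D ≠ 0)
    (hDl : Real.log D ≤ K * Real.log N)
    (hgood : ∀ p : ℕ, p.Prime → Real.log N / 3 < p → ¬ p ∣ D → SelbAux.GoodP A B p) (T : Finset ℕ)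
    (hT : ∀ n ∈ T, n < N / M + 1 ∧ ∀ p : ℕ, p.Prime → (p:ℝ) ≤ (N:ℝ) ^ δ → ¬ (p:ℤ) ∣ ∏ j, (A j * n + B j)) :
    (T.card : ℝ) ≤ (4 * Real.exp (Fintype.card ι * (5 + 3 * K - Real.log (δ/2))) + 1) *
      Real.log (Real.log N / 3) ^ Fintype.card ι / Real.log N ^ Fintype.card ι * N / M := by
  set κ := Fintype.card ι with hκ
  set L₀ := Real.log N with hL₀
  set z := L₀ / 3 with hz
  set w := (N:ℝ) ^ δ with hw
  have hN0 : (0:ℝ) < N := by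
    rcases Nat.eq_zero_or_pos N with h | h
    · exfalso
      rw [h] at hL₀; simp at hL₀; linarith
    · exact_mod_cast h
  have hδ0 : 0 < δ := by rw [hδ]; positivity
  have hlw : Real.log w = δ * L₀ := by rw [hw, Real.log_rpow hN0]
  have hLp : 0 < δ * L₀ := by positivity
  set W := ⌊w⌋₊ with hW
  set P := (W+1).primesBelow.filter (fun p : ℕ => z < (p:ℝ) ∧ ¬ p ∣ D) with hP
  set R := ⌈(N:ℝ) ^ ((1:ℝ)/64)⌉₊ with hR
  have hN64 : (1:ℝ) ≤ (N:ℝ) ^ ((1:ℝ)/64) := by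
    apply Real.one_le_rpow _ (by norm_num)
    exact_mod_cast hN0
  have hRge : (N:ℝ) ^ ((1:ℝ)/64) ≤ R := Nat.le_ceil _
  have hRle : (R:ℝ) ≤ 2 * (N:ℝ) ^ ((1:ℝ)/64) := by
    have := Nat.ceil_lt_add_one (a := (N:ℝ) ^ ((1:ℝ)/64)) (by positivity)
    linarith
  have hR1 : 1 ≤ R := by
    have : (1:ℝ) ≤ R := hN64.trans hRge
    exact_mod_cast this
  have hlogR : L₀ / 64 ≤ Real.log R := by
    have := Real.log_le_log (by positivity) hRge
    rw [Real.log_rpow hN0] at this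
    linarith
  have hmem : ∀ p ∈ P, p.Prime ∧ (p:ℝ) ≤ w ∧ z < p ∧ ¬ p ∣ D := by
    intro p hp
    rw [hP, mem_filter, Nat.mem_primesBelow] at hp
    refine ⟨hp.1.2, ?_, hp.2⟩
    exact (Nat.le_floor_iff (by linarith)).1 (Nat.lt_succ_iff.1 hp.1.1)
  have hsel := SelbAux.sieve_final A B P (N / M + 1) R hR1 (δ * L₀) 3 hLp (by
    intro p hp
    obtain ⟨h1, h2, h3, h4⟩ := hmem p hp
    refine ⟨hgood p h1 h3 h4, ?_, ?_⟩
    · have : 2 * (κ:ℝ) ≤ p := by linarith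
      exact_mod_cast this
    · rw [← hlw]
      exact Real.log_le_log (by exact_mod_cast h1.pos) h2) (by
    have hW1 : 1 ≤ W := Nat.le_floor (by push_cast; linarith)
    have h1 := mert1 W hW1
    have h2 : ∑ p ∈ P, Real.log p / p ≤ ∑ p ∈ (W+1).primesBelow, Real.log p / p := by
      apply Finset.sum_le_sum_of_subset_of_nonneg (Finset.filter_subset _ _)
      intro p _ _
      exact div_nonneg (Real.log_natCast_nonneg p) (by positivity)
    have h3 : Real.log W ≤ Real.log w := Real.log_le_log (by exact_mod_cast hW1) (Nat.floor_le (by linarith))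
    have h4 : Real.log 4 ≤ Real.log w := Real.log_le_log (by norm_num) e1
    rw [hlw] at h3 h4
    linarith) (by
    refine le_trans (le_of_eq ?_) hlogR
    rw [← hκ, hδ]
    field_simp; ring)
  rw [← hκ] at hsel
  have hTle : (T.card : ℝ) ≤ (((range (N / M + 1)).filter (fun n : ℕ => ∀ p ∈ P, ¬ (p:ℤ) ∣ ∏ j, (A j * n + B j))).card : ℝ) := by
    exact_mod_cast Finset.card_le_card (by
      intro n hn
      rw [mem_filter, mem_range]
      exact ⟨(hT n hn).1, fun p hp => (hT n hn).2 p (hmem p hp).1 (hmem p hp).2.1⟩)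
  have hSl := S_lower W z w rfl e1 (by rw [hz]; linarith) e3 D hD K L₀ hK hDl rfl δ hδ0 hlw
  have hM0 : (0:ℝ) < M := by exact_mod_cast hM
  have hhalf : (N:ℝ) ^ ((1:ℝ)/2) ≤ N / M := by
    rw [le_div_iff₀ hM0]
    calc (N:ℝ) ^ ((1:ℝ)/2) * M ≤ (N:ℝ) ^ ((1:ℝ)/2) * (N:ℝ) ^ ((1:ℝ)/2) := by gcongr
      _ = N := by rw [← Real.rpow_add hN0]; norm_num
  have hNM1 : (1:ℝ) ≤ N / M := by
    refine le_trans ?_ hhalf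
    apply Real.one_le_rpow _ (by norm_num)
    exact_mod_cast hN0
  have hX : ((N / M + 1 : ℕ) : ℝ) ≤ 2 * (N / M) := by
    push_cast
    have : ((N / M : ℕ) : ℝ) ≤ N / M := Nat.cast_div_le
    linarith
  set C1 := 5 + 3 * K - Real.log (δ/2) with hC1
  have hL0p : 0 < L₀ := by linarith
  have hlz : 0 < Real.log z := by linarith
  have hexp : Real.exp (-(κ * ∑ p ∈ P, (1:ℝ)/p)) ≤ Real.exp (κ * C1) * (Real.log z ^ κ / L₀ ^ κ) := by
    calc Real.exp (-(κ * ∑ p ∈ P, (1:ℝ)/p)) ≤ Real.exp (κ * C1 + κ * (Real.log (Real.log z) - Real.log L₀)) := by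
          apply Real.exp_le_exp.2
          have : (0:ℝ) ≤ κ := by positivity
          nlinarith
      _ = _ := by
          rw [Real.exp_add]
          congr 1
          rw [← Real.log_div hlz.ne' hL0p.ne', Real.exp_nat_mul, Real.exp_log (by positivity), div_pow]
  have hR8 : (R:ℝ)^8 ≤ Real.log z ^ κ / L₀ ^ κ * (N / M) := by
    calc (R:ℝ)^8 ≤ (2 * (N:ℝ) ^ ((1:ℝ)/64))^8 := by gcongr
      _ = 256 * (N:ℝ) ^ ((1:ℝ)/8) := by
          rw [mul_pow, ← Real.rpow_natCast ((N:ℝ) ^ ((1:ℝ)/64)) 8, ← Real.rpow_mul hN0.le]; norm_num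
      _ ≤ (N:ℝ) ^ ((1:ℝ)/8) * (N:ℝ) ^ ((1:ℝ)/8) := by gcongr
      _ = (N:ℝ) ^ ((1:ℝ)/4) := by rw [← Real.rpow_add hN0]; norm_num
      _ ≤ (N:ℝ) ^ ((3:ℝ)/8) := by
          apply Real.rpow_le_rpow_of_exponent_le _ (by norm_num)
          exact_mod_cast hN0
      _ = (1 / (N:ℝ) ^ ((1:ℝ)/8)) * (N:ℝ) ^ ((1:ℝ)/2) := by
          rw [one_div, ← Real.rpow_neg hN0.le, ← Real.rpow_add hN0]; norm_num
      _ ≤ (Real.log z ^ κ / L₀ ^ κ) * (N / M) := by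
          have : 1 ≤ Real.log z ^ κ := one_le_pow₀ e3
          gcongr
  calc (T.card : ℝ) ≤ _ := hTle
    _ ≤ _ := hsel
    _ ≤ 2 * (2 * (N / M)) * (Real.exp (κ * C1) * (Real.log z ^ κ / L₀ ^ κ)) + Real.log z ^ κ / L₀ ^ κ * (N / M) := by
        gcongr
    _ = _ := by ring

theorem core (ι : Type*) [Fintype ι] [Nonempty ι] (δ K : ℝ)
    (hδ : δ = 1 / (64 * (12 * (Fintype.card ι : ℝ) + 1))) (hK : 0 ≤ K) : ∃ N₀ : ℕ, ∀ N ≥ N₀,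
    ∀ (M : ℕ) (_hM : 1 ≤ M) (_hMN : (M:ℝ) ≤ (N:ℝ) ^ ((1:ℝ)/2)) (A B : ι → ℤ) (D : ℕ) (_hD : D ≠ 0)
    (_hDl : Real.log D ≤ K * Real.log N)
    (_hgood : ∀ p : ℕ, p.Prime → Real.log N / 3 < p → ¬ p ∣ D → SelbAux.GoodP A B p) (T : Finset ℕ)
    (_hT : ∀ n ∈ T, n < N / M + 1 ∧ ∀ p : ℕ, p.Prime → (p:ℝ) ≤ (N:ℝ) ^ δ → ¬ (p:ℤ) ∣ ∏ j, (A j * n + B j)),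
    (T.card : ℝ) ≤ (4 * Real.exp (Fintype.card ι * (5 + 3 * K - Real.log (δ/2))) + 1) *
      Real.log (Real.log N / 3) ^ Fintype.card ι / Real.log N ^ Fintype.card ι * N / M := by
  have hδ0 : 0 < δ := by rw [hδ]; positivity
  have hl : Filter.Tendsto (fun N : ℕ => Real.log N) Filter.atTop Filter.atTop :=
    Real.tendsto_log_atTop.comp tendsto_natCast_atTop_atTop
  have hl3 : Filter.Tendsto (fun N : ℕ => Real.log N / 3) Filter.atTop Filter.atTop :=
    hl.atTop_div_const (by norm_num)
  have hp : ∀ s : ℝ, 0 < s → Filter.Tendsto (fun N : ℕ => (N:ℝ) ^ s) Filter.atTop Filter.atTop :=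
    fun s hs => (tendsto_rpow_atTop hs).comp tendsto_natCast_atTop_atTop
  have E1 := (hp δ hδ0).eventually_ge_atTop 4
  have E2 := hl.eventually_ge_atTop 9
  have E3 := (Real.tendsto_log_atTop.comp hl3).eventually_ge_atTop 1
  have E4 := hl3.eventually_ge_atTop (2 * (Fintype.card ι : ℝ))
  have E6 := (hp (1/8) (by norm_num)).eventually_ge_atTop 256
  have E5 : ∀ᶠ N : ℕ in Filter.atTop, (Real.log N) ^ (Fintype.card ι) ≤ (N:ℝ) ^ ((1:ℝ)/8) := by
    have h := (isLittleO_log_rpow_rpow_atTop (Fintype.card ι : ℝ) (show (0:ℝ) < 1/8 by norm_num)).comp_tendsto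
      (tendsto_natCast_atTop_atTop (R := ℝ))
    have h2 := h.bound (show (0:ℝ) < 1 by norm_num)
    filter_upwards [h2] with N hN
    have : 0 ≤ Real.log N := Real.log_natCast_nonneg N
    simp only [Function.comp, Real.rpow_natCast, one_mul, Real.norm_eq_abs] at hN
    rwa [abs_of_nonneg (by positivity), abs_of_nonneg (by positivity)] at hN
  obtain ⟨N₀, hN₀⟩ := Filter.eventually_atTop.1 (E1.and (E2.and (E3.and (E4.and (E5.and E6)))))
  refine ⟨N₀, fun N hN M hM hMN A B D hD hDl hg T hT => ?_⟩
  obtain ⟨e1, e2, e3, e4, e5, e6⟩ := hN₀ N hN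
  exact core_fixed δ K hδ hK N e1 e2 e3 e4 e5 e6 M hM hMN A B D hD hDl hg T hT

end

lemma primor_pos (z : ℝ) : 1 ≤ primor z := by
  unfold primor
  exact Nat.succ_le_of_lt (Finset.prod_pos (fun p hp => Nat.Prime.pos (Finset.mem_filter.1 hp).2))

lemma primor_le (N : ℕ) (hN : 1 ≤ N) : (primor (Real.log N / 3) : ℝ) ≤ (N:ℝ) ^ ((1:ℝ)/2) := by
  have h1 : primor (Real.log N / 3) ≤ 4 ^ ⌊Real.log N / 3⌋₊ := primorial_le_four_pow _
  have hN0 : (0:ℝ) < N := by exact_mod_cast hN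
  have hl : 0 ≤ Real.log N := Real.log_natCast_nonneg N
  have h4 : Real.log 4 ≤ 3 / 2 := by
    rw [show (4:ℝ) = 2 ^ 2 by norm_num, Real.log_pow]
    have := Real.log_two_lt_d9
    push_cast; linarith
  have h40 : 0 < Real.log 4 := Real.log_pos (by norm_num)
  calc (primor (Real.log N / 3) : ℝ) ≤ (4:ℝ) ^ ⌊Real.log N / 3⌋₊ := by exact_mod_cast h1
    _ = (4:ℝ) ^ (⌊Real.log N / 3⌋₊ : ℝ) := (Real.rpow_natCast _ _).symm
    _ ≤ (4:ℝ) ^ (Real.log N / 3) := by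
        apply Real.rpow_le_rpow_of_exponent_le (by norm_num)
        exact Nat.floor_le (by positivity)
    _ ≤ _ := by
        rw [Real.rpow_def_of_pos (by norm_num), Real.rpow_def_of_pos hN0]
        apply Real.exp_le_exp.2
        nlinarith

lemma dvd_primor {p : ℕ} (hp : p.Prime) {z : ℝ} (h : (p:ℝ) ≤ z) : p ∣ primor z := by
  unfold primor
  apply Finset.dvd_prod_of_mem
  rw [Finset.mem_filter, Finset.mem_range]
  exact ⟨Nat.lt_succ_of_le (Nat.le_floor h), hp⟩

lemma not_dvd_primor {p : ℕ} (hp : p.Prime) {z : ℝ} (h : z < (p:ℝ)) : ¬ p ∣ primor z := by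
  unfold primor
  intro hd
  have := SelbAux.dvd_prod_primes _ (fun q hq => (Finset.mem_filter.1 hq).2) hp hd
  rw [Finset.mem_filter, Finset.mem_range] at this
  have h2 : ⌊z⌋₊ < p := (Nat.floor_lt' hp.ne_zero).2 h
  omega

lemma E_bound (N M H a₁ a₂ b₁ b₂ h₁ h₂ : ℤ) (hH : 1 ≤ H) (hN : 4 * H ^ 2 ≤ N) (hM0 : 0 ≤ M) (hM : M ≤ N)
    (ha₁ : |a₁| ≤ H) (ha₂ : |a₂| ≤ H) (hb₁ : |b₁| ≤ H) (hb₂ : |b₂| ≤ H)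
    (hh₁ : |h₁| ≤ N ^ 100) (hh₂ : |h₂| ≤ N ^ 100) :
    |a₁ * a₂ * M * (h₁ - h₂) + (a₁ * b₂ - a₂ * b₁)| ≤ N ^ 102 := by
  have hN1 : 1 ≤ N := by nlinarith
  have hp : 1 ≤ N ^ 100 := one_le_pow₀ hN1
  have m1 : |h₁ - h₂| ≤ 2 * N ^ 100 := (abs_sub _ _).trans (by linarith)
  have m2 : |a₁ * b₂ - a₂ * b₁| ≤ 2 * H ^ 2 := by
    refine (abs_sub _ _).trans ?_
    rw [abs_mul, abs_mul]
    have := mul_le_mul ha₁ hb₂ (abs_nonneg _) (by linarith)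
    have := mul_le_mul ha₂ hb₁ (abs_nonneg _) (by linarith)
    nlinarith
  have m3 : |a₁ * a₂ * M * (h₁ - h₂)| ≤ H * H * N * (2 * N ^ 100) := by
    rw [abs_mul, abs_mul, abs_mul, abs_of_nonneg hM0]
    gcongr
  refine (abs_add_le _ _).trans ?_
  have e : N ^ 102 = N * N * N ^ 100 := by ring
  rw [e]
  generalize N ^ 100 = Y at *
  have m4 : 4 * H ^ 2 * (N * Y) ≤ N * (N * Y) := by
    have : 0 ≤ N * Y := by nlinarith
    exact mul_le_mul_of_nonneg_right hN this
  have m5 : H ^ 2 * 1 ≤ H ^ 2 * (N * Y) := by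
    apply mul_le_mul_of_nonneg_left _ (by positivity)
    nlinarith
  nlinarith

theorem stmt3
    (k : ℕ) (hk : 1 ≤ k) (a b : Fin k → ℤ) (ha : ∀ i, a i ≠ 0)
    (F : ℤ → ℤ) (hF : ∀ n : ℤ, F n = ∏ i, (a i * n + b i))
    (hdisc : (∏ i, a i) *
      ∏ i, ∏ j ∈ Finset.univ.filter (fun j => j ≠ i), (a i * b j - b i * a j) ≠ 0)
    (hadm : ∀ p : ℕ, p.Prime → ∃ n : ℤ, ¬ ((p : ℤ) ∣ F n))
    (r : ℕ) (hr : 1 ≤ r) :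
    ∃ (c : ℝ) (N₀ : ℕ), 0 < c ∧
      ∀ N : ℕ, N₀ ≤ N →
        ∀ A : Finset ℕ, A ⊆ SFset F N ((N : ℝ) ^ ((1 : ℝ) / (4 * k + 1))) →
          ∀ bb : ℕ, bb < primor (Real.log N / 3) →
            ∀ h : Fin r → ℤ,
              Function.Injective h →
              (∀ i, |h i| ≤ (N : ℤ) ^ (100 : ℕ)) →
              -- `h i − h j ∉ (S − S) ∩ ℤ`, where `S ⊆ ℚ` is the set of roots of
              -- `G(X) = F(bb + MX) = ∏ i (a i (bb + MX) + b i)`: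
              (∀ i j, i ≠ j → ∀ s s' : ℚ,
                (∏ u, ((a u : ℚ) * ((bb : ℚ) + (primor (Real.log N / 3) : ℚ) * s) + (b u : ℚ))) = 0 →
                (∏ u, ((a u : ℚ) * ((bb : ℚ) + (primor (Real.log N / 3) : ℚ) * s') + (b u : ℚ))) = 0 →
                ((h i - h j : ℤ) : ℚ) ≠ s - s') →
              (Set.ncard {x : ℤ | ∀ i : Fin r,
                  ∃ n ∈ Abset A N (primor (Real.log N / 3)) bb, x = (n : ℤ) + h i} : ℝ)
                ≤ c * (Real.log (Real.log N / 3)) ^ (k * r) / (Real.log N) ^ (k * r) *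
                    (N : ℝ) / (primor (Real.log N / 3) : ℝ) := by
  have hne : Nonempty (Fin k × Fin r) := ⟨(⟨0, hk⟩, ⟨0, hr⟩)⟩
  have hcard : Fintype.card (Fin k × Fin r) = k * r := by simp
  set δ : ℝ := 1 / (64 * (12 * (Fintype.card (Fin k × Fin r) : ℝ) + 1)) with hδ
  set K : ℝ := k + 102 * (k * r : ℕ) * (k * r : ℕ) with hK
  obtain ⟨N₀, hcore⟩ := core (Fin k × Fin r) δ K hδ (by positivity)
  rw [hcard] at hcore
  set H : ℕ := ∑ u, (a u).natAbs + ∑ u, (b u).natAbs + 1 with hH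
  refine ⟨4 * Real.exp (((k * r : ℕ) : ℝ) * (5 + 3 * K - Real.log (δ / 2))) + 1, max N₀ (4 * H ^ 2), ?_, ?_⟩
  rotate_left
  · intro N hN A hA bb hbb h hinj hh hroot
    set M := primor (Real.log N / 3) with hM
    have hH1 : 1 ≤ H := by omega
    have hN1 : 4 * H ^ 2 ≤ N := (le_max_right _ _).trans hN
    have hNpos : 1 ≤ N := by nlinarith
    have hM1 : 1 ≤ M := primor_pos _
    have hMh : (M:ℝ) ≤ (N:ℝ) ^ ((1:ℝ)/2) := primor_le N hNpos
    have hNr : (1:ℝ) ≤ N := by exact_mod_cast hNpos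
    have hMN : M ≤ N := by
      have : (M:ℝ) ≤ N := hMh.trans (by
        conv_rhs => rw [← Real.rpow_one (N:ℝ)]
        exact Real.rpow_le_rpow_of_exponent_le hNr (by norm_num))
      exact_mod_cast this
    have haH : ∀ u, |a u| ≤ (H:ℤ) := by
      intro u
      have := Finset.single_le_sum (f := fun u => (a u).natAbs) (fun _ _ => Nat.zero_le _) (Finset.mem_univ u)
      rw [Int.abs_eq_natAbs]
      have h2 : (a u).natAbs ≤ H := by omega
      exact_mod_cast h2
    have hbH : ∀ u, |b u| ≤ (H:ℤ) := by
      intro u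
      have := Finset.single_le_sum (f := fun u => (b u).natAbs) (fun _ _ => Nat.zero_le _) (Finset.mem_univ u)
      rw [Int.abs_eq_natAbs]
      have h2 : (b u).natAbs ≤ H := by omega
      exact_mod_cast h2
    let i0 : Fin r := ⟨0, hr⟩
    let AA : Fin k × Fin r → ℤ := fun j => a j.1 * M
    let BB : Fin k × Fin r → ℤ := fun j => a j.1 * (bb + (h i0 - h j.2) * M) + b j.1
    let E : Fin k × Fin r → Fin k × Fin r → ℤ := fun j j' =>
      a j.1 * a j'.1 * M * (h j.2 - h j'.2) + (a j.1 * b j'.1 - a j'.1 * b j.1)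
    have hABE : ∀ j j', AA j * BB j' - AA j' * BB j = M * E j j' := by
      intro j j'; simp only [AA, BB, E]; ring
    have hE0 : ∀ j j', j ≠ j' → E j j' ≠ 0 := by
      rintro ⟨u, i⟩ ⟨v, i'⟩ hne hE
      simp only [E] at hE
      by_cases hi : i = i'
      · subst hi
        have huv : v ≠ u := by rintro rfl; exact hne rfl
        have h1 := (mul_ne_zero_iff.1 hdisc).2
        rw [Finset.prod_ne_zero_iff] at h1
        have h2 := h1 u (Finset.mem_univ _)
        rw [Finset.prod_ne_zero_iff] at h2
        apply h2 v (by simp [huv])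
        linarith
      · have hau : (a u : ℚ) ≠ 0 := by exact_mod_cast ha u
        have hav : (a v : ℚ) ≠ 0 := by exact_mod_cast ha v
        have hMq : (M : ℚ) ≠ 0 := by
          have : M ≠ 0 := by omega
          exact_mod_cast this
        have hz : ∀ u : Fin k, ∏ u', ((a u' : ℚ) * ((bb : ℚ) + (M : ℚ) * ((-(b u : ℚ) / a u - bb) / M)) + (b u' : ℚ)) = 0 := by
          intro u
          apply Finset.prod_eq_zero (Finset.mem_univ u)
          have hau : (a u : ℚ) ≠ 0 := by exact_mod_cast ha u
          field_simp; ring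
        apply hroot i' i (fun e => hi e.symm) _ _ (hz u) (hz v)
        have hEq : (a u : ℚ) * a v * M * (h i - h i') + (a u * b v - a v * b u) = 0 := by exact_mod_cast hE
        push_cast
        field_simp
        linarith
    let D : ℕ := (∏ u, (a u).natAbs) * ∏ j, ∏ j', if j = j' then 1 else (E j j').natAbs
    have hD0 : D ≠ 0 := by
      apply mul_ne_zero
      · rw [Finset.prod_ne_zero_iff]; intro u _; simpa using ha u
      · rw [Finset.prod_ne_zero_iff]; intro j _
        rw [Finset.prod_ne_zero_iff]; intro j' _
        split_ifs with hj
        · exact one_ne_zero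
        · simpa using hE0 j j' hj
    have hDle : D ≤ N ^ k * (N ^ (102 * (k * r))) ^ (k * r) := by
      apply Nat.mul_le_mul
      · calc ∏ u, (a u).natAbs ≤ ∏ u : Fin k, N := by
              apply Finset.prod_le_prod' 
              intro u _
              have := haH u
              have : (a u).natAbs ≤ H := by
                rw [Int.abs_eq_natAbs] at this; exact_mod_cast this
              nlinarith
          _ = N ^ k := by simp
      · have hEle : ∀ j j', (if j = j' then 1 else (E j j').natAbs) ≤ N ^ 102 := by
          intro j j'
          split_ifs
          · exact Nat.one_le_pow _ _ hNpos
          · have := E_bound N M H (a j.1) (a j'.1) (b j.1) (b j'.1) (h j.2) (h j'.2) (by exact_mod_cast hH1)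
              (by exact_mod_cast hN1) (by positivity) (by exact_mod_cast hMN) (haH _) (haH _) (hbH _) (hbH _) (hh _) (hh _)
            rw [Int.abs_eq_natAbs] at this
            exact_mod_cast this
        calc ∏ j, ∏ j', (if j = j' then 1 else (E j j').natAbs) ≤ ∏ j : Fin k × Fin r, ∏ j' : Fin k × Fin r, N ^ 102 := by
              apply Finset.prod_le_prod'
              intro j _
              apply Finset.prod_le_prod'
              intro j' _
              exact hEle j j'
          _ = _ := by
              rw [Finset.prod_const, Finset.prod_const, Finset.card_univ, hcard, ← pow_mul N 102]
    have hDl : Real.log D ≤ K * Real.log N := by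
      have h1 : (D:ℝ) ≤ (N:ℝ) ^ k * ((N:ℝ) ^ (102 * (k * r))) ^ (k * r) := by exact_mod_cast hDle
      have h2 := Real.log_le_log (by exact_mod_cast Nat.pos_of_ne_zero hD0) h1
      rw [Real.log_mul (by positivity) (by positivity), Real.log_pow, Real.log_pow, Real.log_pow] at h2
      refine h2.trans (le_of_eq ?_)
      rw [hK]; push_cast; ring
    have hgood : ∀ p : ℕ, p.Prime → Real.log N / 3 < p → ¬ p ∣ D → SelbAux.GoodP AA BB p := by
      intro p hp hzp hpD
      have hpM : ¬ (p:ℤ) ∣ (M:ℤ) := by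
        rw [Int.natCast_dvd_natCast]; exact not_dvd_primor hp hzp
      have hpi : Prime (p:ℤ) := Nat.prime_iff_prime_int.1 hp
      refine ⟨hp, ?_, ?_⟩
      · intro j hj
        rcases hpi.dvd_or_dvd hj with h1 | h1
        · apply hpD
          apply Dvd.dvd.mul_right
          exact (Int.natCast_dvd.1 h1).trans (Finset.dvd_prod_of_mem (fun u => (a u).natAbs) (Finset.mem_univ j.1))
        · exact hpM h1
      · intro j j' hjj hd
        rw [hABE] at hd
        rcases hpi.dvd_or_dvd hd with h1 | h1
        · exact hpM h1
        · apply hpD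
          apply Dvd.dvd.mul_left
          have h2 : p ∣ (if j = j' then 1 else (E j j').natAbs) := by
            rw [if_neg hjj]; exact Int.natCast_dvd.1 h1
          exact (h2.trans (Finset.dvd_prod_of_mem (fun j' => if j = j' then 1 else (E j j').natAbs) (Finset.mem_univ j'))).trans
            (Finset.dvd_prod_of_mem (fun j => ∏ j', if j = j' then 1 else (E j j').natAbs) (Finset.mem_univ j))
    classical
    let T : Finset ℕ := (Finset.range (N+1)).filter (fun n => ∀ i, ∃ m ∈ Abset A N M bb, (n:ℤ) + h i0 = (m:ℤ) + h i)
    have hTcard : Set.ncard {x : ℤ | ∀ i : Fin r, ∃ n ∈ Abset A N M bb, x = (n : ℤ) + h i} ≤ T.card := by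
      calc _ ≤ Set.ncard ((T.image (fun n : ℕ => (n:ℤ) + h i0) : Finset ℤ) : Set ℤ) := by
            apply Set.ncard_le_ncard _ (Finset.finite_toSet _)
            intro x hx
            obtain ⟨n, hn, hxn⟩ := hx i0
            rw [Finset.mem_coe, Finset.mem_image]
            refine ⟨n, ?_, hxn.symm⟩
            rw [Finset.mem_filter]
            refine ⟨(Finset.mem_filter.1 hn).1, ?_⟩
            intro i
            obtain ⟨m, hm, hxm⟩ := hx i
            exact ⟨m, hm, by rw [← hxn, hxm]⟩
        _ = (T.image (fun n : ℕ => (n:ℤ) + h i0)).card := Set.ncard_coe_finset _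
        _ ≤ T.card := Finset.card_image_le
    have hT : ∀ n ∈ T, n < N / M + 1 ∧ ∀ p : ℕ, p.Prime → (p:ℝ) ≤ (N:ℝ) ^ δ → ¬ (p:ℤ) ∣ ∏ j, (AA j * n + BB j) := by
      intro n hn
      have hn2 := (Finset.mem_filter.1 hn).2
      constructor
      · obtain ⟨m, hm, hnm⟩ := hn2 i0
        have hmn : n = m := by omega
        subst hmn
        have h1 := hA (Finset.mem_filter.1 hm).2
        have h2 := (Finset.mem_Icc.1 (Finset.mem_filter.1 h1).1).2
        apply Nat.lt_succ_of_le
        rw [Nat.le_div_iff_mul_le (by omega)]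
        omega
      · intro p hp hpw hd
        have hpi : Prime (p:ℤ) := Nat.prime_iff_prime_int.1 hp
        obtain ⟨j, _, hj⟩ := (Prime.dvd_finsetProd_iff hpi _).1 hd
        obtain ⟨m, hm, hnm⟩ := hn2 j.2
        have h1 := hA (Finset.mem_filter.1 hm).2
        have h2 := (Finset.mem_filter.1 h1).2
        have h3 : (p:ℝ) ≤ (N : ℝ) ^ ((1 : ℝ) / (4 * k + 1)) := by
          refine hpw.trans (Real.rpow_le_rpow_of_exponent_le hNr ?_)
          rw [hδ, hcard]
          apply one_div_le_one_div_of_le (by positivity)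
          have hr' : (1:ℝ) ≤ r := by exact_mod_cast hr
          have hk' : (0:ℝ) ≤ k := by positivity
          push_cast
          nlinarith
        have h4 := dvd_primor hp h3
        have h5 : (p:ℤ) ∣ F ((bb + m * M : ℕ) : ℤ) := by
          rw [hF]
          have e : AA j * n + BB j = a j.1 * ((bb + m * M : ℕ) : ℤ) + b j.1 := by
            have : (m:ℤ) = n + h i0 - h j.2 := by linarith
            simp only [AA, BB]
            push_cast
            rw [this]; ring
          rw [e] at hj
          exact hj.trans (Finset.dvd_prod_of_mem (fun u => a u * ((bb + m * M : ℕ) : ℤ) + b u) (Finset.mem_univ j.1))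
        have h6 : (p:ℤ) ∣ (primor ((N : ℝ) ^ ((1 : ℝ) / (4 * k + 1))) : ℤ) := Int.natCast_dvd_natCast.2 h4
        have h7 := Int.dvd_coe_gcd h5 h6
        rw [h2] at h7
        exact hp.one_lt.ne' (Nat.dvd_one.1 (by exact_mod_cast h7))
    have hfin := hcore N ((le_max_left _ _).trans hN) M hM1 hMh AA BB D hD0 hDl hgood T hT
    refine le_trans ?_ hfin
    exact_mod_cast hTcard
  · positivity
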